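/- arXiv:2603.03861 — 7 statements merged into one kernel-verified Lean document; each statement's English description precedes it below -/
import Mathlib

section
/- Let a = p/q ∈ (0,1) be rational and let δ ∈ (0,1). Then there exist constants c, C > 0 depending only on a and δ such that for all sufficiently large n, writing d = 2^n and k = ⌊d^δ⌋, one has c·d^{a+δ(1−a)} ≤ log₂ a_{n,k} ≤ C·d^{a+δ(1−a)}. (This is Theorem 1.5, part 1: the asymptotics of the number of ⌊d^δ⌋-dimensional faces of the basic Hanner polytope P_n^a ⊂ ℝ^d.) -/
/-- `A_a = {⌊n/a⌋ : n ∈ ℕ, n ≥ 1}`, the set of floors of positive multiples of `1/a`. -/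
def Aset (a : ℝ) : Set ℕ := {m | ∃ n : ℕ, 1 ≤ n ∧ m = ⌊(n : ℝ) / a⌋₊}

/-- The generating function `F_n(t) = ∑_k a_{n,k} t^k` of the face numbers of the basic
Hanner-type polytopes: `F_0 = t + 2`, and `F_{n+1} = F_n ^ 2` for `n ∈ A_a` (product
step), `F_{n+1} = t·F_n ^ 2 + 2·F_n` for `n ∉ A_a` (convex hull step).
The coefficient `a_{n,k}` is `(F a n).coeff k`. -/
noncomputable def F (a : ℝ) : ℕ → Polynomial ℤ
  | 0 => Polynomial.X + 2
  | n + 1 =>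
      haveI := Classical.propDecidable (n ∈ Aset a)
      if n ∈ Aset a then F a n ^ 2
      else Polynomial.X * F a n ^ 2 + 2 * F a n

/-!
Write `d = 2 ^ n`, and let `2 ^ v_n` be the constant coefficient of `F_n`, so that `v` doubles at
the steps in `A_a` and grows by one at the others. Since `A_a` consists of the positive `n` at
which `⌈n a⌉ < ⌈(n + 1) a⌉`, `v_n` is comparable to `2 ^ (n a) = d ^ a`.

Whichever step is taken, `F_{n+1}` is essentially the square of `F_n`. Multiplying the
constant coefficient of `F_j` with its other coefficients and then squaring `s` times gives
`log₂ a_{j+1+s,k} ≥ 2 ^ s v_j` once `k ≥ 2 ^ (s+1) - 1`. In the other direction,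
`a_{n,k} ≤ x ^ (-k) F_n(x)` for `x > 0`; the choice `x = 4 ^ (-v_j)` is so small that `F_j(x)` is
still at most `4 ^ v_j`, and the remaining steps square it up to a constant factor.
Taking `2 ^ s` and `2 ^ n / 2 ^ j` of order `k` in both bounds, `log₂ a_{n,k}` is of order
`k v_j`, that is, of order `k (d / k) ^ a = d ^ a k ^ (1 - a)`, for `1 ≤ k ≤ d / 2`.
-/

open Polynomial Set

section NonnegCoeff

variable {R : Type*} [Semiring R] [PartialOrder R] [IsOrderedRing R] {P Q : R[X]}

theorem coeff_mul_nonneg (hP : ∀ k, 0 ≤ P.coeff k) (hQ : ∀ k, 0 ≤ Q.coeff k) (k : ℕ) :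
    0 ≤ (P * Q).coeff k := by
  rw [coeff_mul]
  exact Finset.sum_nonneg fun x _ ↦ mul_nonneg (hP x.1) (hQ x.2)

theorem coeff_mul_coeff_le_coeff_mul (hP : ∀ k, 0 ≤ P.coeff k) (hQ : ∀ k, 0 ≤ Q.coeff k)
    (i j : ℕ) : P.coeff i * Q.coeff j ≤ (P * Q).coeff (i + j) := by
  rw [coeff_mul]
  exact Finset.single_le_sum (f := fun x : ℕ × ℕ ↦ P.coeff x.1 * Q.coeff x.2) (a := (i, j))
    (fun x _ ↦ mul_nonneg (hP x.1) (hQ x.2)) (Finset.HasAntidiagonal.mem_antidiagonal.2 rfl)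

theorem sq_le_coeff_sq (hP : ∀ k, 0 ≤ P.coeff k) {c : R} (hc : 0 ≤ c) {l u : ℕ}
    (h : ∀ i ∈ Icc l u, c ≤ P.coeff i) {r : ℕ} (hr : r ∈ Icc (2 * l) (2 * u)) :
    c ^ 2 ≤ (P ^ 2).coeff r := by
  obtain ⟨hlr, hru⟩ := hr
  have hleft : c ≤ P.coeff (r / 2) := h _ ⟨by omega, by omega⟩
  have hright : c ≤ P.coeff (r - r / 2) := h _ ⟨by omega, by omega⟩
  calc c ^ 2 = c * c := sq c
    _ ≤ P.coeff (r / 2) * P.coeff (r - r / 2) := mul_le_mul hleft hright hc (hP _)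
    _ ≤ (P * P).coeff (r / 2 + (r - r / 2)) := coeff_mul_coeff_le_coeff_mul hP hP _ _
    _ = (P ^ 2).coeff r := by rw [sq, Nat.add_sub_of_le (Nat.div_le_self r 2)]

theorem coeff_mul_pow_le_eval (hP : ∀ k, 0 ≤ P.coeff k) {x : R} (hx : 0 ≤ x) (k : ℕ) :
    P.coeff k * x ^ k ≤ P.eval x := by
  have hterm (i : ℕ) : 0 ≤ P.coeff i * x ^ i := mul_nonneg (hP i) (pow_nonneg hx i)
  rw [eval_eq_sum_range' (n := max (P.natDegree + 1) (k + 1)) (by omega)]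
  exact Finset.single_le_sum (f := fun i ↦ P.coeff i * x ^ i) (fun i _ ↦ hterm i)
    (Finset.mem_range.2 (by omega))

end NonnegCoeff

section RealPower

theorem div_rpow_mul_self {x y : ℝ} (hx : 0 ≤ x) (hy : 0 < y) (b : ℝ) :
    (x / y) ^ b * y = x ^ b * y ^ (1 - b) := by
  rw [Real.div_rpow hx hy.le, Real.rpow_sub hy, Real.rpow_one]
  ring

theorem rpow_div_two_le_floor_rpow {x b : ℝ} (hx : 1 ≤ x) (hb : b ∈ Icc 0 1) :
    x ^ b / 2 ≤ (⌊x⌋₊ : ℝ) ^ b := by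
  have hfloor : x / 2 ≤ ⌊x⌋₊ := by
    have : (1 : ℝ) ≤ ⌊x⌋₊ := by exact_mod_cast (Nat.one_le_floor_iff _).2 hx
    linarith [Nat.lt_floor_add_one x]
  calc x ^ b / 2 ≤ x ^ b / 2 ^ b := by
        gcongr
        exact Real.rpow_le_self_of_one_le one_le_two hb.2
    _ = (x / 2) ^ b := (Real.div_rpow (by linarith) zero_le_two b).symm
    _ ≤ (⌊x⌋₊ : ℝ) ^ b := Real.rpow_le_rpow (by linarith) hfloor hb.1

theorem eventually_two_mul_rpow_le {δ : ℝ} (hδ : δ < 1) :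
    ∀ᶠ x : ℝ in Filter.atTop, 2 * x ^ δ ≤ x := by
  filter_upwards [(tendsto_rpow_atTop (sub_pos.2 hδ)).eventually_ge_atTop 2,
    Filter.eventually_gt_atTop 0] with x hx hx0
  calc 2 * x ^ δ ≤ x ^ (1 - δ) * x ^ δ := by gcongr
    _ = x := by rw [← Real.rpow_add hx0, sub_add_cancel, Real.rpow_one]

end RealPower

section Recursion

variable {a : ℝ} {n : ℕ}

theorem F_zero (a : ℝ) : F a 0 = X + 2 := by
  rw [F]

theorem F_succ_of_mem (h : n ∈ Aset a) : F a (n + 1) = F a n ^ 2 := by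
  rw [F, if_pos h]

theorem F_succ_of_notMem (h : n ∉ Aset a) : F a (n + 1) = X * F a n ^ 2 + 2 * F a n := by
  rw [F, if_neg h]

open Classical in
/-- The base-two logarithm `v_n` of the constant coefficient of `F_n`
(see `coeff_zero_F`), defined by its own recursion. -/
noncomputable def vertexExponent (a : ℝ) : ℕ → ℕ
  | 0 => 1
  | n + 1 => if n ∈ Aset a then 2 * vertexExponent a n else vertexExponent a n + 1

theorem vertexExponent_succ_of_mem (h : n ∈ Aset a) :
    vertexExponent a (n + 1) = 2 * vertexExponent a n := by
  rw [vertexExponent, if_pos h]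

theorem vertexExponent_succ_of_notMem (h : n ∉ Aset a) :
    vertexExponent a (n + 1) = vertexExponent a n + 1 := by
  rw [vertexExponent, if_neg h]

theorem one_le_vertexExponent (a : ℝ) (n : ℕ) : 1 ≤ vertexExponent a n := by
  induction n with
  | zero => rw [vertexExponent]
  | succ n ih => rw [vertexExponent]; split_ifs <;> omega

theorem vertexExponent_mono (a : ℝ) : Monotone (vertexExponent a) :=
  monotone_nat_of_le_succ fun n ↦ by
    have := one_le_vertexExponent a n
    rw [vertexExponent]; split_ifs <;> omega

end Recursion

section LowerBound

variable {a : ℝ} {n : ℕ}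

theorem coeff_F_succ_of_notMem (h : n ∉ Aset a) (k : ℕ) :
    (F a (n + 1)).coeff (k + 1) = (F a n ^ 2).coeff k + 2 * (F a n).coeff (k + 1) := by
  rw [F_succ_of_notMem h, coeff_add, coeff_X_mul, coeff_ofNat_mul]

theorem coeff_zero_F (a : ℝ) (n : ℕ) : (F a n).coeff 0 = 2 ^ vertexExponent a n := by
  induction n with
  | zero => simp [F_zero, vertexExponent]
  | succ n ih =>
    by_cases h : n ∈ Aset a
    · rw [F_succ_of_mem h, vertexExponent_succ_of_mem h, sq, mul_coeff_zero, ih]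
      ring
    · rw [F_succ_of_notMem h, vertexExponent_succ_of_notMem h, coeff_add, coeff_X_mul_zero,
        coeff_ofNat_mul, ih]
      ring

theorem coeff_F_nonneg (a : ℝ) (n k : ℕ) : 0 ≤ (F a n).coeff k := by
  induction n generalizing k with
  | zero => rcases k with _ | _ | k <;> simp [F_zero, coeff_X, coeff_ofNat_succ]
  | succ n ih =>
    have hsq (k : ℕ) : 0 ≤ (F a n ^ 2).coeff k := sq (F a n) ▸ coeff_mul_nonneg ih ih k
    by_cases h : n ∈ Aset a
    · exact F_succ_of_mem h ▸ hsq k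
    · rcases k with _ | k
      · rw [coeff_zero_F]; positivity
      · rw [coeff_F_succ_of_notMem h]; linarith [hsq k, ih (k + 1)]

theorem exists_coeff_sq_le_coeff_F_succ (a : ℝ) (n : ℕ) {k : ℕ} (hk : 1 ≤ k) :
    ∃ i, i ≤ k ∧ k ≤ i + 1 ∧ (F a n ^ 2).coeff i ≤ (F a (n + 1)).coeff k := by
  by_cases h : n ∈ Aset a
  · exact ⟨k, le_rfl, k.le_succ, (F_succ_of_mem h ▸ le_rfl)⟩
  · obtain ⟨i, rfl⟩ := Nat.exists_eq_add_of_le' hk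
    refine ⟨i, i.le_succ, le_rfl, ?_⟩
    rw [coeff_F_succ_of_notMem h]
    linarith [coeff_F_nonneg a n (i + 1)]

theorem sq_le_coeff_F_succ {c : ℤ} (hc : 0 ≤ c) {l u : ℕ}
    (h : ∀ i ∈ Icc l u, c ≤ (F a n).coeff i) {r : ℕ} (hr : r ∈ Icc (2 * l + 1) (2 * u)) :
    c ^ 2 ≤ (F a (n + 1)).coeff r := by
  obtain ⟨hlr, hru⟩ := hr
  obtain ⟨i, hir, hri, hle⟩ := exists_coeff_sq_le_coeff_F_succ a n (show 1 ≤ r by omega)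
  exact (sq_le_coeff_sq (coeff_F_nonneg a n) hc h ⟨by omega, by omega⟩).trans hle

theorem one_le_coeff_F (a : ℝ) {n k : ℕ} (hk : k ≤ 2 ^ n) : 1 ≤ (F a n).coeff k := by
  induction n generalizing k with
  | zero =>
    obtain rfl | rfl : k = 0 ∨ k = 1 := by rw [pow_zero] at hk; omega
    all_goals simp [F_zero, coeff_ofNat_succ]
  | succ n ih =>
    rcases Nat.eq_zero_or_pos k with rfl | hk0
    · rw [coeff_zero_F]
      exact one_le_pow₀ one_le_two
    · rw [pow_succ'] at hk
      rw [← one_pow 2]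
      exact sq_le_coeff_F_succ zero_le_one (l := 0) (fun i hi ↦ ih hi.2) ⟨hk0, hk⟩

theorem two_pow_le_coeff_F_succ (a : ℝ) {j r : ℕ} (hr : r ∈ Icc 1 (2 ^ j)) :
    2 ^ vertexExponent a j ≤ (F a (j + 1)).coeff r := by
  obtain ⟨i, hir, -, hle⟩ := exists_coeff_sq_le_coeff_F_succ a j hr.1
  calc (2 : ℤ) ^ vertexExponent a j
      ≤ (F a j).coeff 0 * (F a j).coeff i := by
        rw [coeff_zero_F]
        exact le_mul_of_one_le_right (by positivity) (one_le_coeff_F a (hir.trans hr.2))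
    _ ≤ (F a j ^ 2).coeff (0 + i) := by
        rw [sq]
        exact coeff_mul_coeff_le_coeff_mul (coeff_F_nonneg a j) (coeff_F_nonneg a j) 0 i
    _ ≤ (F a (j + 1)).coeff r := by rwa [zero_add]

theorem two_pow_le_coeff_F (a : ℝ) (j s : ℕ) {r : ℕ}
    (hr : r ∈ Icc (2 ^ (s + 1) - 1) (2 ^ (j + s))) :
    2 ^ (vertexExponent a j * 2 ^ s) ≤ (F a (j + 1 + s)).coeff r := by
  induction s generalizing r with
  | zero => simpa using two_pow_le_coeff_F_succ a hr
  | succ s ih =>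
    rw [pow_succ 2 s, ← mul_assoc, pow_mul]
    refine sq_le_coeff_F_succ (by positivity) (fun i hi ↦ ih hi) ?_
    have : 1 ≤ 2 ^ (s + 1) := Nat.one_le_two_pow
    rw [pow_succ 2 (s + 1), ← add_assoc, pow_succ 2 (j + s)] at hr
    exact ⟨by have := hr.1; omega, by have := hr.2; omega⟩

end LowerBound

section UpperBound

variable {a x : ℝ} {n : ℕ}

theorem aeval_F_zero (a x : ℝ) : aeval x (F a 0) = x + 2 := by
  rw [F_zero, map_add, aeval_X, map_ofNat]

theorem aeval_F_succ_of_mem (h : n ∈ Aset a) : aeval x (F a (n + 1)) = aeval x (F a n) ^ 2 := by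
  rw [F_succ_of_mem h, map_pow]

theorem aeval_F_succ_of_notMem (h : n ∉ Aset a) :
    aeval x (F a (n + 1)) = x * aeval x (F a n) ^ 2 + 2 * aeval x (F a n) := by
  rw [F_succ_of_notMem h, map_add, map_mul, map_mul, map_pow, aeval_X, map_ofNat]

theorem coeff_F_mul_pow_le_aeval (a : ℝ) (hx : 0 ≤ x) (n k : ℕ) :
    (F a n).coeff k * x ^ k ≤ aeval x (F a n) := by
  have hP (i : ℕ) : 0 ≤ ((F a n).map (algebraMap ℤ ℝ)).coeff i := by
    rw [coeff_map]
    exact Int.cast_nonneg (coeff_F_nonneg a n i)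
  have hterm := coeff_mul_pow_le_eval hP hx k
  rwa [coeff_map, eval_map_algebraMap, eq_intCast] at hterm

theorem one_le_aeval_F (a : ℝ) (hx : 0 ≤ x) (n : ℕ) : 1 ≤ aeval x (F a n) := by
  calc (1 : ℝ) ≤ (F a n).coeff 0 := by exact_mod_cast one_le_coeff_F a (Nat.zero_le _)
    _ ≤ aeval x (F a n) := by simpa using coeff_F_mul_pow_le_aeval a hx n 0

theorem aeval_F_le_four_pow {J : ℕ} (hx : 0 ≤ x) (hxJ : x * 4 ^ vertexExponent a J ≤ 1) {j : ℕ}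
    (hj : j ≤ J) : aeval x (F a j) ≤ 4 ^ vertexExponent a j := by
  have hx_mul {i : ℕ} (hi : i ≤ J) : x * 4 ^ vertexExponent a i ≤ 1 :=
    (mul_le_mul_of_nonneg_left
      (pow_le_pow_right₀ (by norm_num) (vertexExponent_mono a hi)) hx).trans hxJ
  induction j with
  | zero =>
    rw [aeval_F_zero, vertexExponent]
    have := hx_mul J.zero_le
    rw [vertexExponent] at this
    linarith
  | succ j ih =>
    have ih := ih (by omega)
    have hone := one_le_aeval_F a hx j
    by_cases h : j ∈ Aset a
    · rw [aeval_F_succ_of_mem h, vertexExponent_succ_of_mem h, mul_comm, pow_mul]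
      gcongr
    · have hxF : x * aeval x (F a j) ≤ 1 :=
        (mul_le_mul_of_nonneg_left ih hx).trans (hx_mul (by omega))
      calc aeval x (F a (j + 1))
          = (x * aeval x (F a j) + 2) * aeval x (F a j) := by
            rw [aeval_F_succ_of_notMem h]; ring
        _ ≤ 4 * 4 ^ vertexExponent a j := by gcongr; linarith
        _ = 4 ^ vertexExponent a (j + 1) := by rw [vertexExponent_succ_of_notMem h, pow_succ']

theorem three_mul_aeval_F_succ_le (a : ℝ) (hx : x ∈ Icc 0 1) (n : ℕ) :
    3 * aeval x (F a (n + 1)) ≤ (3 * aeval x (F a n)) ^ 2 := by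
  have hone := one_le_aeval_F a hx.1 n
  by_cases h : n ∈ Aset a
  · rw [aeval_F_succ_of_mem h]
    nlinarith
  · rw [aeval_F_succ_of_notMem h]
    nlinarith [mul_le_mul_of_nonneg_right hx.2 (sq_nonneg (aeval x (F a n)))]

theorem three_mul_aeval_F_add_le (a : ℝ) (hx : x ∈ Icc 0 1) (j s : ℕ) :
    3 * aeval x (F a (j + s)) ≤ (3 * aeval x (F a j)) ^ 2 ^ s := by
  induction s with
  | zero => simp
  | succ s ih =>
    have hone := one_le_aeval_F a hx.1 (j + s)
    calc 3 * aeval x (F a (j + s + 1)) ≤ (3 * aeval x (F a (j + s))) ^ 2 :=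
          three_mul_aeval_F_succ_le a hx (j + s)
      _ ≤ ((3 * aeval x (F a j)) ^ 2 ^ s) ^ 2 := by gcongr
      _ = (3 * aeval x (F a j)) ^ 2 ^ (s + 1) := by rw [← pow_mul, ← pow_succ]

theorem coeff_F_add_le (a : ℝ) (j s k : ℕ) :
    ((F a (j + s)).coeff k : ℝ) ≤
      4 ^ (vertexExponent a j * k + (vertexExponent a j + 1) * 2 ^ s) := by
  set v := vertexExponent a j
  set x : ℝ := (4 ^ v)⁻¹
  have hx0 : 0 ≤ x := by positivity
  have hx1 : x ≤ 1 := inv_le_one_of_one_le₀ (one_le_pow₀ (by norm_num))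
  have hxv : x * 4 ^ v = 1 := inv_mul_cancel₀ (by positivity)
  have hone := one_le_aeval_F a hx0
  have heval : aeval x (F a (j + s)) ≤ 4 ^ ((v + 1) * 2 ^ s) := by
    calc aeval x (F a (j + s)) ≤ 3 * aeval x (F a (j + s)) := by linarith [hone (j + s)]
      _ ≤ (3 * aeval x (F a j)) ^ 2 ^ s := three_mul_aeval_F_add_le a ⟨hx0, hx1⟩ j s
      _ ≤ (4 * 4 ^ v) ^ 2 ^ s := by
        have := hone j
        gcongr
        · norm_num
        · exact aeval_F_le_four_pow hx0 hxv.le le_rfl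
      _ = 4 ^ ((v + 1) * 2 ^ s) := by rw [← pow_succ', ← pow_mul]
  calc ((F a (j + s)).coeff k : ℝ)
      = (F a (j + s)).coeff k * x ^ k * 4 ^ (v * k) := by
        rw [mul_assoc, pow_mul, ← mul_pow, hxv, one_pow, mul_one]
    _ ≤ 4 ^ ((v + 1) * 2 ^ s) * 4 ^ (v * k) := by
        gcongr
        exact (coeff_F_mul_pow_le_aeval a hx0 (j + s) k).trans heval
    _ = 4 ^ (v * k + (v + 1) * 2 ^ s) := by rw [← pow_add, add_comm]

end UpperBound

section VertexExponent

variable {a : ℝ} {n : ℕ}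

theorem mem_Aset_iff_exists (ha : 0 < a) :
    n ∈ Aset a ↔ ∃ m : ℕ, 1 ≤ m ∧ n * a ≤ m ∧ m < ((n + 1 : ℕ) : ℝ) * a := by
  refine exists_congr fun m ↦ and_congr_right fun _ ↦ ?_
  rw [eq_comm, Nat.floor_eq_iff (by positivity), le_div_iff₀ ha, div_lt_iff₀ ha, Nat.cast_succ]

theorem ceil_mul_lt_ceil_succ_mul_of_mem (ha : 0 < a) (h : n ∈ Aset a) :
    ⌈n * a⌉₊ < ⌈((n + 1 : ℕ) : ℝ) * a⌉₊ := by
  obtain ⟨m, -, hle, hlt⟩ := (mem_Aset_iff_exists ha).1 h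
  exact (Nat.ceil_le.2 hle).trans_lt (Nat.lt_ceil.2 hlt)

theorem ceil_succ_mul_le_ceil_mul_of_notMem (ha : 0 < a) (hn : 1 ≤ n) (h : n ∉ Aset a) :
    ⌈((n + 1 : ℕ) : ℝ) * a⌉₊ ≤ ⌈n * a⌉₊ := by
  contrapose! h
  have : (0 : ℝ) < n := by exact_mod_cast hn
  exact (mem_Aset_iff_exists ha).2
    ⟨⌈n * a⌉₊, Nat.ceil_pos.2 (by positivity), Nat.le_ceil _, Nat.lt_ceil.1 h⟩

theorem ceil_succ_mul_le (ha1 : a ≤ 1) (n : ℕ) :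
    ⌈((n + 1 : ℕ) : ℝ) * a⌉₊ ≤ ⌈n * a⌉₊ + 1 := by
  rw [Nat.ceil_le]
  push_cast
  linarith [Nat.le_ceil (n * a)]

theorem two_pow_ceil_le_vertexExponent (ha : 0 < a) (ha1 : a ≤ 1) (n : ℕ) :
    2 ^ ⌈n * a⌉₊ ≤ vertexExponent a n := by
  induction n with
  | zero => simp [vertexExponent]
  | succ n ih =>
    have hsucc : 2 ^ ⌈((n + 1 : ℕ) : ℝ) * a⌉₊ ≤ 2 * 2 ^ ⌈n * a⌉₊ := by
      rw [← pow_succ']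
      exact Nat.pow_le_pow_right two_pos (ceil_succ_mul_le ha1 n)
    by_cases h : n ∈ Aset a
    · rw [vertexExponent_succ_of_mem h]
      omega
    · rw [vertexExponent_succ_of_notMem h]
      rcases Nat.eq_zero_or_pos n with rfl | hn
      · simpa [vertexExponent] using hsucc
      · have := Nat.pow_le_pow_right two_pos
          (ceil_succ_mul_le_ceil_mul_of_notMem ha hn h)
        omega

theorem rpow_le_vertexExponent (ha : 0 < a) (ha1 : a ≤ 1) (n : ℕ) :
    ((2 : ℝ) ^ n) ^ a ≤ vertexExponent a n := by
  calc ((2 : ℝ) ^ n) ^ a = 2 ^ (n * a) := (Real.rpow_natCast_mul zero_le_two n a).symm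
    _ ≤ 2 ^ (⌈n * a⌉₊ : ℝ) := Real.rpow_le_rpow_of_exponent_le one_le_two (Nat.le_ceil _)
    _ = ((2 ^ ⌈n * a⌉₊ : ℕ) : ℝ) := by rw [Real.rpow_natCast]; norm_cast
    _ ≤ vertexExponent a n := by exact_mod_cast two_pow_ceil_le_vertexExponent ha ha1 n

/-- Dividing by `2 ^ ⌈n a⌉`, doubling steps have no effect, and the `i`-th step that adds one
contributes at most `2 ^ (-i a)`. -/
theorem vertexExponent_le_mul_geom_sum (ha : 0 < a) (n : ℕ) :
    (vertexExponent a n : ℝ) ≤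
      2 ^ ⌈n * a⌉₊ * (1 + ∑ i ∈ Finset.range n, ((2 : ℝ) ^ (-a)) ^ i) := by
  induction n with
  | zero => simp [vertexExponent]
  | succ n ih =>
    set S := ∑ i ∈ Finset.range n, ((2 : ℝ) ^ (-a)) ^ i
    have hS : 0 ≤ S := Finset.sum_nonneg fun i _ ↦ by positivity
    have hρ : 0 ≤ ((2 : ℝ) ^ (-a)) ^ n := by positivity
    rw [Finset.sum_range_succ, ← add_assoc]
    by_cases h : n ∈ Aset a
    · have hceil := Nat.succ_le_of_lt (ceil_mul_lt_ceil_succ_mul_of_mem ha h)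
      calc (vertexExponent a (n + 1) : ℝ) = 2 * vertexExponent a n := by
            rw [vertexExponent_succ_of_mem h]; push_cast; rfl
        _ ≤ 2 ^ (⌈n * a⌉₊ + 1) * (1 + S) := by rw [pow_succ', mul_assoc]; gcongr
        _ ≤ 2 ^ ⌈((n + 1 : ℕ) : ℝ) * a⌉₊ * (1 + S + (2 ^ (-a)) ^ n) :=
            mul_le_mul (pow_le_pow_right₀ one_le_two hceil) (le_add_of_nonneg_right hρ)
              (by positivity) (by positivity)
    · have hone : (1 : ℝ) ≤ 2 ^ ⌈n * a⌉₊ * (2 ^ (-a)) ^ n := by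
        rw [← Real.rpow_mul_natCast zero_le_two, ← Real.rpow_natCast, ← Real.rpow_add two_pos]
        exact Real.one_le_rpow one_le_two (by linarith [Nat.le_ceil (n * a)])
      calc (vertexExponent a (n + 1) : ℝ) = vertexExponent a n + 1 := by
            rw [vertexExponent_succ_of_notMem h]; push_cast; rfl
        _ ≤ 2 ^ ⌈n * a⌉₊ * (1 + S) + 2 ^ ⌈n * a⌉₊ * (2 ^ (-a)) ^ n := add_le_add ih hone
        _ = 2 ^ ⌈n * a⌉₊ * (1 + S + (2 ^ (-a)) ^ n) := by ring
        _ ≤ 2 ^ ⌈((n + 1 : ℕ) : ℝ) * a⌉₊ * (1 + S + (2 ^ (-a)) ^ n) := by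
            gcongr
            · exact one_le_two
            · exact n.le_succ

theorem exists_vertexExponent_le_mul_rpow (ha : 0 < a) :
    ∃ K : ℝ, 0 < K ∧ ∀ n : ℕ, (vertexExponent a n : ℝ) ≤ K * ((2 : ℝ) ^ n) ^ a := by
  set ρ : ℝ := 2 ^ (-a)
  have hρ0 : 0 ≤ ρ := by positivity
  have hρ1 : ρ < 1 := Real.rpow_lt_one_of_one_lt_of_neg one_lt_two (neg_lt_zero.2 ha)
  have hinv : 0 < (1 - ρ)⁻¹ := inv_pos.2 (sub_pos.2 hρ1)
  refine ⟨2 * (1 + (1 - ρ)⁻¹), by positivity, fun n ↦ ?_⟩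
  have hgeom : ∑ i ∈ Finset.range n, ρ ^ i ≤ (1 - ρ)⁻¹ :=
    sum_le_hasSum _ (fun i _ ↦ pow_nonneg hρ0 i) (hasSum_geometric_of_lt_one hρ0 hρ1)
  have hceil : (2 : ℝ) ^ ⌈n * a⌉₊ ≤ 2 * (2 ^ n) ^ a := by
    rw [← Real.rpow_natCast_mul zero_le_two, ← Real.rpow_natCast, mul_comm 2,
      ← Real.rpow_add_one two_ne_zero]
    exact Real.rpow_le_rpow_of_exponent_le one_le_two
      (by linarith [Nat.ceil_lt_add_one (show 0 ≤ n * a by positivity)])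
  calc (vertexExponent a n : ℝ) ≤ 2 ^ ⌈n * a⌉₊ * (1 + ∑ i ∈ Finset.range n, ρ ^ i) :=
        vertexExponent_le_mul_geom_sum ha n
    _ ≤ 2 * (2 ^ n) ^ a * (1 + (1 - ρ)⁻¹) := by gcongr
    _ = 2 * (1 + (1 - ρ)⁻¹) * (2 ^ n) ^ a := by ring

end VertexExponent

section Asymptotics

variable {a : ℝ} {n k : ℕ}

theorem vertexExponent_mul_le_logb_coeff_F (a : ℝ) {j s : ℕ}
    (hk : k ∈ Icc (2 ^ (s + 1) - 1) (2 ^ (j + s))) :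
    (vertexExponent a j : ℝ) * 2 ^ s ≤ Real.logb 2 ((F a (j + 1 + s)).coeff k) := by
  have hcoeff : (2 : ℝ) ^ (vertexExponent a j * 2 ^ s) ≤ (F a (j + 1 + s)).coeff k := by
    exact_mod_cast two_pow_le_coeff_F a j s hk
  calc (vertexExponent a j : ℝ) * 2 ^ s = Real.logb 2 (2 ^ (vertexExponent a j * 2 ^ s)) := by
        simp [Real.logb_pow]
    _ ≤ Real.logb 2 ((F a (j + 1 + s)).coeff k) :=
        Real.logb_le_logb_of_le one_lt_two (by positivity) hcoeff

theorem le_logb_coeff_F (ha : 0 < a) (ha1 : a ≤ 1) (hk : 1 ≤ k) (hkn : 2 * k ≤ 2 ^ n) :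
    1 / 8 * (((2 : ℝ) ^ n) ^ a * (k : ℝ) ^ (1 - a)) ≤ Real.logb 2 ((F a n).coeff k) := by
  obtain ⟨s, hs⟩ := Nat.exists_eq_add_of_le' (Nat.log_pos one_lt_two (show 2 ≤ k + 1 by omega))
  have hsk : 2 ^ (s + 1) ≤ k + 1 := hs ▸ Nat.pow_log_le_self 2 k.succ_ne_zero
  have hks : k + 1 < 2 ^ (s + 1 + 1) := hs ▸ Nat.lt_pow_succ_log_self one_lt_two (k + 1)
  have hsn : s + 1 ≤ n := (Nat.pow_le_pow_iff_right one_lt_two).1 (by omega)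
  obtain ⟨j, rfl⟩ : ∃ j, n = j + 1 + s := ⟨n - (s + 1), by omega⟩
  have hkjs : k ≤ 2 ^ (j + s) := by
    rw [add_right_comm, pow_succ'] at hkn
    omega
  have hs_lower : (k : ℝ) / 4 ≤ 2 ^ s := by
    have : k ≤ 2 ^ s * 4 := by rw [pow_succ, pow_succ] at hks; omega
    rw [div_le_iff₀ (by norm_num)]
    exact_mod_cast this
  have hj_lower : (2 : ℝ) ^ (j + 1 + s) / k / 2 ≤ 2 ^ j := by
    have : (2 : ℝ) ^ s ≤ k := by
      have : 2 ^ s ≤ k := by rw [pow_succ] at hsk; omega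
      exact_mod_cast this
    rw [div_le_iff₀ two_pos, div_le_iff₀ (by positivity), pow_add, pow_succ]
    gcongr
  calc 1 / 8 * (((2 : ℝ) ^ (j + 1 + s)) ^ a * (k : ℝ) ^ (1 - a))
      = (2 ^ (j + 1 + s) / k) ^ a / 2 * (k / 4) := by
        rw [← div_rpow_mul_self (by positivity) (by positivity)]
        ring
    _ ≤ (2 ^ (j + 1 + s) / k) ^ a / 2 ^ a * (k / 4) := by
        gcongr
        exact Real.rpow_le_self_of_one_le one_le_two ha1
    _ = (2 ^ (j + 1 + s) / k / 2) ^ a * (k / 4) := by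
        rw [← Real.div_rpow (by positivity) zero_le_two]
    _ ≤ (2 ^ j) ^ a * 2 ^ s := by gcongr
    _ ≤ vertexExponent a j * 2 ^ s := by gcongr; exact rpow_le_vertexExponent ha ha1 j
    _ ≤ Real.logb 2 ((F a (j + 1 + s)).coeff k) :=
        vertexExponent_mul_le_logb_coeff_F a ⟨by omega, hkjs⟩

theorem logb_coeff_F_le_mul_vertexExponent (a : ℝ) {j m : ℕ} (hmk : 2 ^ m ≤ k)
    (hk : k ≤ 2 ^ (j + m)) :
    Real.logb 2 ((F a (j + m)).coeff k) ≤ 6 * (vertexExponent a j * k) := by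
  have hexp : vertexExponent a j * k + (vertexExponent a j + 1) * 2 ^ m ≤
      3 * (vertexExponent a j * k) := by
    nlinarith [one_le_vertexExponent a j]
  have hpos : (0 : ℝ) < (F a (j + m)).coeff k := by exact_mod_cast one_le_coeff_F a hk
  calc Real.logb 2 ((F a (j + m)).coeff k)
      ≤ Real.logb 2 (4 ^ (3 * (vertexExponent a j * k))) :=
        Real.logb_le_logb_of_le one_lt_two hpos
          ((coeff_F_add_le a j m k).trans (pow_le_pow_right₀ (by norm_num) hexp))
    _ = 6 * (vertexExponent a j * k) := by
        rw [show (4 : ℝ) = 2 ^ 2 by norm_num, ← pow_mul, Real.logb_pow,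
          Real.logb_self_eq_one one_lt_two]
        push_cast
        ring

theorem exists_logb_coeff_F_le (ha : 0 < a) :
    ∃ C : ℝ, 0 < C ∧ ∀ n k : ℕ, 1 ≤ k → k ≤ 2 ^ n →
      Real.logb 2 ((F a n).coeff k) ≤ C * (((2 : ℝ) ^ n) ^ a * (k : ℝ) ^ (1 - a)) := by
  obtain ⟨K, hK, hv⟩ := exists_vertexExponent_le_mul_rpow ha
  refine ⟨6 * K * 2 ^ a, by positivity, fun n k hk hkn ↦ ?_⟩
  set m := Nat.log 2 k
  have hmk : 2 ^ m ≤ k := Nat.pow_log_le_self 2 (by omega)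
  have hkm : k < 2 ^ (m + 1) := Nat.lt_pow_succ_log_self one_lt_two k
  have hmn : m ≤ n := (Nat.pow_le_pow_iff_right one_lt_two).1 (hmk.trans hkn)
  obtain ⟨j, rfl⟩ := Nat.exists_eq_add_of_le' hmn
  have hj_upper : (2 : ℝ) ^ j ≤ 2 * (2 ^ (j + m) / k) := by
    have : (k : ℝ) ≤ 2 ^ m * 2 := by rw [← pow_succ]; exact_mod_cast hkm.le
    rw [← mul_div_assoc, le_div_iff₀ (by positivity), pow_add, mul_comm 2, mul_assoc]
    gcongr
  calc Real.logb 2 ((F a (j + m)).coeff k) ≤ 6 * (vertexExponent a j * k) :=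
        logb_coeff_F_le_mul_vertexExponent a hmk hkn
    _ ≤ 6 * (K * (2 ^ j) ^ a * k) := by gcongr; exact hv j
    _ ≤ 6 * (K * (2 * (2 ^ (j + m) / k)) ^ a * k) := by gcongr
    _ = 6 * K * 2 ^ a * ((2 ^ (j + m)) ^ a * k ^ (1 - a)) := by
        rw [← div_rpow_mul_self (by positivity) (by positivity),
          Real.mul_rpow zero_le_two (by positivity)]
        ring

theorem face_number_asymptotics_rational_general (ha : a ∈ Ioc 0 1) {δ : ℝ} (hδ : δ ∈ Ico 0 1) :
    ∃ c C : ℝ, 0 < c ∧ 0 < C ∧ ∃ N : ℕ, ∀ n : ℕ, N ≤ n →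
      c * ((2 : ℝ) ^ n) ^ (a + δ * (1 - a)) ≤
          Real.logb 2 ((F a n).coeff ⌊((2 : ℝ) ^ n) ^ δ⌋₊) ∧
      Real.logb 2 ((F a n).coeff ⌊((2 : ℝ) ^ n) ^ δ⌋₊) ≤
          C * ((2 : ℝ) ^ n) ^ (a + δ * (1 - a)) := by
  obtain ⟨C, hC, hupper⟩ := exists_logb_coeff_F_le ha.1
  obtain ⟨N, hN⟩ := Filter.eventually_atTop.1 <|
    (tendsto_pow_atTop_atTop_of_one_lt one_lt_two).eventually (eventually_two_mul_rpow_le hδ.2)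
  refine ⟨1 / 16, C, by norm_num, hC, N, fun n hn ↦ ?_⟩
  have hN := hN n hn
  set d : ℝ := 2 ^ n
  have hD : 1 ≤ d ^ δ := Real.one_le_rpow (one_le_pow₀ one_le_two) hδ.1
  set k := ⌊d ^ δ⌋₊
  have hk : 1 ≤ k := (Nat.one_le_floor_iff _).2 hD
  have hkD : (k : ℝ) ≤ d ^ δ := Nat.floor_le (by positivity)
  have hkn : 2 * k ≤ 2 ^ n := by
    have : 2 * (k : ℝ) ≤ 2 ^ n := by linarith
    exact_mod_cast this
  have hexp : d ^ (a + δ * (1 - a)) = d ^ a * (d ^ δ) ^ (1 - a) := by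
    rw [Real.rpow_add (by positivity), Real.rpow_mul (by positivity)]
  have hb : 1 - a ∈ Icc 0 1 := ⟨sub_nonneg.2 ha.2, sub_le_self 1 ha.1.le⟩
  rw [hexp]
  constructor
  · calc 1 / 16 * (d ^ a * (d ^ δ) ^ (1 - a)) = 1 / 8 * (d ^ a * ((d ^ δ) ^ (1 - a) / 2)) := by
          ring
      _ ≤ 1 / 8 * (d ^ a * (k : ℝ) ^ (1 - a)) := by
          gcongr
          exact rpow_div_two_le_floor_rpow hD hb
      _ ≤ Real.logb 2 ((F a n).coeff k) := le_logb_coeff_F ha.1 ha.2 hk hkn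
  · calc Real.logb 2 ((F a n).coeff k) ≤ C * (d ^ a * (k : ℝ) ^ (1 - a)) :=
          hupper n k hk (by omega)
      _ ≤ C * (d ^ a * (d ^ δ) ^ (1 - a)) := by gcongr; exact hb.1

end Asymptotics

/-- **Theorem 1.5, part 1.** For rational `a = p/q ∈ (0,1)` and `δ ∈ (0,1)` there are
constants `c, C > 0` (depending only on `a` and `δ`) such that for all large `n`,
with `d = 2^n` and `k = ⌊d^δ⌋`,
`c·d^(a+δ(1-a)) ≤ log₂ a_{n,k} ≤ C·d^(a+δ(1-a))`. -/
theorem face_number_asymptotics_rational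
    (p q : ℕ) (hp : 0 < p) (hpq : p < q) (a : ℝ) (ha : a = (p : ℝ) / q)
    (δ : ℝ) (hδ : δ ∈ Set.Ioo (0 : ℝ) 1) :
    ∃ c C : ℝ, 0 < c ∧ 0 < C ∧ ∃ N : ℕ, ∀ n : ℕ, N ≤ n →
      c * ((2 : ℝ) ^ n) ^ (a + δ * (1 - a)) ≤
          Real.logb 2 (((F a n).coeff ⌊((2 : ℝ) ^ n) ^ δ⌋₊ : ℝ)) ∧
      Real.logb 2 (((F a n).coeff ⌊((2 : ℝ) ^ n) ^ δ⌋₊ : ℝ)) ≤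
          C * ((2 : ℝ) ^ n) ^ (a + δ * (1 - a)) := by
  have hq : (0 : ℝ) < q := by exact_mod_cast hp.trans hpq
  subst ha
  exact face_number_asymptotics_rational_general
    ⟨div_pos (by exact_mod_cast hp) hq, (div_le_one hq).2 (by exact_mod_cast hpq.le)⟩
    (Ioo_subset_Ico_self hδ)
end

section
/- For every a ∈ (0,1), define A_{n,k} = max_{0 ≤ j ≤ k} a_{n,j}. Then for all n, r ≥ 0 and all k ≥ 0: A_{n+r,k} ≤ (k+2)^{2^r}·(A_{n,k})^{2^r}. In particular a_{n+r,k} ≤ ((k+2)·A_{n,k})^{2^r}. (Remark 2.2, part 2, with explicit constant (k+2) in place of k.) -/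
/-- `A_{n,k} = max_{0 ≤ j ≤ k} a_{n,j}`, the maximum of the coefficients of `F_n` of
index at most `k`. -/
noncomputable def maxA (a : ℝ) (n k : ℕ) : ℤ :=
  (Finset.range (k + 1)).sup' (by simp) fun j => (F a n).coeff j

/-!
For an integer polynomial `p` with nonnegative coefficients, let `M` be the largest coefficient of
`p` of index at most `k`. A coefficient of `p ^ 2` of index `j ≤ k` is a sum of `j + 1` products, so
it is at most `(k + 1) * M ^ 2`. In `X * p ^ 2` the shift saves one product, leaving
`k * M ^ 2`, and the term `2 * p` then fits in because `M ≤ M ^ 2` for integers. Either way the new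
maximum is at most `(k + 2) * M ^ 2`, which says that the quantity `(k + 2) * M` is at most squared
in each step.
-/

section NonnegCoeff

open Polynomial

/-- The semiring of polynomials all of whose coefficients are nonnegative. -/
def nonnegCoeff (R : Type*) [Semiring R] [PartialOrder R] [IsOrderedRing R] : Subsemiring R[X] where
  carrier := {p | ∀ k, 0 ≤ p.coeff k}
  zero_mem' k := (coeff_zero k).ge
  one_mem' k := by
    rw [coeff_one]
    split_ifs
    exacts [zero_le_one, le_rfl]
  add_mem' hp hq k := by
    rw [coeff_add]
    exact add_nonneg (hp k) (hq k)
  mul_mem' hp hq k := by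
    rw [coeff_mul]
    exact Finset.sum_nonneg fun _ _ => mul_nonneg (hp _) (hq _)

theorem X_mem_nonnegCoeff {R : Type*} [Semiring R] [PartialOrder R] [IsOrderedRing R] :
    (X : R[X]) ∈ nonnegCoeff R := fun k => by
  rw [coeff_X]
  split_ifs
  exacts [zero_le_one, le_rfl]

end NonnegCoeff

section CoeffMax

open Polynomial Finset

variable {R : Type*} [Semiring R] [LinearOrder R]

/-- The largest among the coefficients of `p` of index at most `k`; `maxA a n k` is
`coeffMax (F a n) k` by definition. -/
def coeffMax (p : R[X]) (k : ℕ) : R :=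
  (range (k + 1)).sup' nonempty_range_add_one p.coeff

theorem coeffMax_le_iff {p : R[X]} {k : ℕ} {c : R} :
    coeffMax p k ≤ c ↔ ∀ j ≤ k, p.coeff j ≤ c := by
  simp only [coeffMax, sup'_le_iff, mem_range, Nat.lt_succ_iff]

theorem coeff_le_coeffMax (p : R[X]) {j k : ℕ} (hjk : j ≤ k) : p.coeff j ≤ coeffMax p k :=
  coeffMax_le_iff.1 le_rfl j hjk

@[gcongr]
theorem coeffMax_mono (p : R[X]) {j k : ℕ} (hjk : j ≤ k) : coeffMax p j ≤ coeffMax p k :=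
  coeffMax_le_iff.2 fun _ hi => coeff_le_coeffMax p (hi.trans hjk)

theorem coeffMax_X_mul_zero (p : R[X]) : coeffMax (X * p) 0 = 0 := by
  simp [coeffMax]

variable [IsOrderedRing R] {p q : R[X]}

theorem coeffMax_nonneg (hp : p ∈ nonnegCoeff R) (k : ℕ) : 0 ≤ coeffMax p k :=
  (hp k).trans (coeff_le_coeffMax p le_rfl)

theorem coeffMax_add_le (p q : R[X]) (k : ℕ) :
    coeffMax (p + q) k ≤ coeffMax p k + coeffMax q k :=
  coeffMax_le_iff.2 fun j hj => by
    rw [coeff_add]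
    exact add_le_add (coeff_le_coeffMax p hj) (coeff_le_coeffMax q hj)

theorem coeff_mul_le_mul_coeffMax (hp : p ∈ nonnegCoeff R) (hq : q ∈ nonnegCoeff R) (k : ℕ) :
    (p * q).coeff k ≤ (k + 1 : ℕ) * (coeffMax p k * coeffMax q k) :=
  calc (p * q).coeff k = ∑ ij ∈ antidiagonal k, p.coeff ij.1 * q.coeff ij.2 := coeff_mul p q k
    _ ≤ #(antidiagonal k) • (coeffMax p k * coeffMax q k) :=
      sum_le_card_nsmul _ _ _ fun _ hij =>
        mul_le_mul (coeff_le_coeffMax p (HasAntidiagonal.antidiagonal.fst_le hij))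
          (coeff_le_coeffMax q (HasAntidiagonal.antidiagonal.snd_le hij)) (hq _)
          (coeffMax_nonneg hp k)
    _ = (k + 1 : ℕ) * (coeffMax p k * coeffMax q k) := by
      rw [Nat.card_antidiagonal, nsmul_eq_mul]

theorem coeffMax_mul_le (hp : p ∈ nonnegCoeff R) (hq : q ∈ nonnegCoeff R) (k : ℕ) :
    coeffMax (p * q) k ≤ (k + 1 : ℕ) * (coeffMax p k * coeffMax q k) := by
  refine coeffMax_le_iff.2 fun j hj => (coeff_mul_le_mul_coeffMax hp hq j).trans ?_
  have hpj := coeffMax_nonneg hp j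
  have hqj := coeffMax_nonneg hq j
  have hpk := coeffMax_nonneg hp k
  gcongr

theorem coeffMax_X_mul_succ_le (hp : p ∈ nonnegCoeff R) (k : ℕ) :
    coeffMax (X * p) (k + 1) ≤ coeffMax p k := by
  refine coeffMax_le_iff.2 fun j hj => ?_
  cases j with
  | zero =>
    rw [coeff_X_mul_zero]
    exact coeffMax_nonneg hp k
  | succ j =>
    rw [coeff_X_mul]
    exact coeff_le_coeffMax p (Nat.le_of_succ_le_succ hj)

theorem coeffMax_X_mul_mul_le (hp : p ∈ nonnegCoeff R) (hq : q ∈ nonnegCoeff R) (k : ℕ) :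
    coeffMax (X * (p * q)) k ≤ k * (coeffMax p k * coeffMax q k) := by
  cases k with
  | zero => rw [coeffMax_X_mul_zero, Nat.cast_zero, zero_mul]
  | succ k =>
    have hqk := coeffMax_nonneg hq k
    have hpk := coeffMax_nonneg hp (k + 1)
    calc coeffMax (X * (p * q)) (k + 1) ≤ coeffMax (p * q) k :=
          coeffMax_X_mul_succ_le (mul_mem hp hq) k
      _ ≤ (k + 1 : ℕ) * (coeffMax p k * coeffMax q k) := coeffMax_mul_le hp hq k
      _ ≤ (k + 1 : ℕ) * (coeffMax p (k + 1) * coeffMax q (k + 1)) := by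
          gcongr <;> exact k.le_succ

end CoeffMax

theorem le_pow_two_pow_of_le_sq {R : Type*} [Semiring R] [PartialOrder R] [IsOrderedRing R]
    {u : ℕ → R} (hu : ∀ n, 0 ≤ u n) (hsq : ∀ n, u (n + 1) ≤ u n ^ 2) (n r : ℕ) :
    u (n + r) ≤ u n ^ 2 ^ r := by
  induction r with
  | zero => rw [add_zero, pow_zero, pow_one]
  | succ r ih =>
    calc u (n + (r + 1)) ≤ u (n + r) ^ 2 := hsq (n + r)
      _ ≤ (u n ^ 2 ^ r) ^ 2 := pow_le_pow_left₀ (hu _) ih 2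
      _ = u n ^ 2 ^ (r + 1) := by rw [← pow_mul, ← pow_succ]

section HannerStep

open Polynomial

/-- One step of the recursion for the face generating functions of Hanner-type polytopes, with the
choice left open: `q` arises from `p` by the product step or by the convex hull step. -/
def IsHannerStep {R : Type*} [Semiring R] (p q : R[X]) : Prop :=
  q = p ^ 2 ∨ q = X * p ^ 2 + 2 * p

theorem isHannerStep_F (a : ℝ) (n : ℕ) : IsHannerStep (F a n) (F a (n + 1)) := by
  unfold IsHannerStep
  rw [F]
  split_ifs
  exacts [Or.inl rfl, Or.inr rfl]

theorem F_zero_mem_nonnegCoeff (a : ℝ) : F a 0 ∈ nonnegCoeff ℤ :=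
  add_mem X_mem_nonnegCoeff (ofNat_mem _ 2)

theorem IsHannerStep.mem_nonnegCoeff {R : Type*} [Semiring R] [PartialOrder R] [IsOrderedRing R]
    {p q : R[X]} (h : IsHannerStep p q) (hp : p ∈ nonnegCoeff R) : q ∈ nonnegCoeff R := by
  rcases h with rfl | rfl
  · exact pow_mem hp 2
  · exact add_mem (mul_mem X_mem_nonnegCoeff (pow_mem hp 2)) (mul_mem (ofNat_mem _ 2) hp)

theorem IsHannerStep.coeffMax_le {p q : ℤ[X]} (h : IsHannerStep p q) (hp : p ∈ nonnegCoeff ℤ)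
    (k : ℕ) : coeffMax q k ≤ (k + 2) * coeffMax p k ^ 2 := by
  rcases h with rfl | rfl
  · calc coeffMax (p ^ 2) k ≤ (k + 1) * coeffMax p k ^ 2 := by
          simpa only [sq, Nat.cast_succ] using coeffMax_mul_le hp hp k
      _ ≤ (k + 2) * coeffMax p k ^ 2 := by gcongr; norm_num
  · have hshift : coeffMax (X * p ^ 2) k ≤ k * coeffMax p k ^ 2 := by
      simpa only [sq] using coeffMax_X_mul_mul_le hp hp k
    have hdouble : coeffMax (2 * p) k ≤ 2 * coeffMax p k := by
      simpa only [two_mul] using coeffMax_add_le p p k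
    calc coeffMax (X * p ^ 2 + 2 * p) k ≤ coeffMax (X * p ^ 2) k + coeffMax (2 * p) k :=
          coeffMax_add_le _ _ k
      _ ≤ k * coeffMax p k ^ 2 + 2 * coeffMax p k := add_le_add hshift hdouble
      _ ≤ k * coeffMax p k ^ 2 + 2 * coeffMax p k ^ 2 := by gcongr; exact Int.le_self_sq _
      _ = (k + 2) * coeffMax p k ^ 2 := by ring

theorem maxA_growth_general {P : ℕ → ℤ[X]} (h_zero : P 0 ∈ nonnegCoeff ℤ)
    (h_step : ∀ n, IsHannerStep (P n) (P (n + 1))) (n r k : ℕ) :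
    coeffMax (P (n + r)) k ≤ ((k : ℤ) + 2) ^ (2 ^ r) * coeffMax (P n) k ^ (2 ^ r) ∧
    (P (n + r)).coeff k ≤ (((k : ℤ) + 2) * coeffMax (P n) k) ^ (2 ^ r) := by
  have h_mem (m : ℕ) : P m ∈ nonnegCoeff ℤ := by
    induction m with
    | zero => exact h_zero
    | succ m hm => exact (h_step m).mem_nonnegCoeff hm
  have h_nonneg (m : ℕ) : 0 ≤ coeffMax (P m) k := coeffMax_nonneg (h_mem m) k
  have h_sq (m : ℕ) :
      (k + 2) * coeffMax (P (m + 1)) k ≤ ((k + 2) * coeffMax (P m) k) ^ 2 :=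
    calc (k + 2) * coeffMax (P (m + 1)) k ≤ (k + 2) * ((k + 2) * coeffMax (P m) k ^ 2) := by
          gcongr
          exact (h_step m).coeffMax_le (h_mem m) k
      _ = ((k + 2) * coeffMax (P m) k) ^ 2 := by ring
  have h_growth : coeffMax (P (n + r)) k ≤ ((k + 2) * coeffMax (P n) k) ^ 2 ^ r :=
    calc coeffMax (P (n + r)) k ≤ (k + 2) * coeffMax (P (n + r)) k :=
          le_mul_of_one_le_left (h_nonneg _) (by lia)
      _ ≤ ((k + 2) * coeffMax (P n) k) ^ 2 ^ r :=
          le_pow_two_pow_of_le_sq (u := fun m => (k + 2) * coeffMax (P m) k)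
            (fun m => mul_nonneg (by positivity) (h_nonneg m)) h_sq n r
  exact ⟨h_growth.trans_eq (mul_pow _ _ _), (coeff_le_coeffMax _ le_rfl).trans h_growth⟩

end HannerStep

/-- **Remark 2.2, part 2** (with explicit constant `k+2`). For all `n, r, k`:
`A_{n+r,k} ≤ (k+2)^(2^r)·A_{n,k}^(2^r)`, and in particular
`a_{n+r,k} ≤ ((k+2)·A_{n,k})^(2^r)`. -/
theorem maxA_growth (a : ℝ) (ha : a ∈ Set.Ioo (0 : ℝ) 1) (n r k : ℕ) :
    maxA a (n + r) k ≤ ((k : ℤ) + 2) ^ (2 ^ r) * maxA a n k ^ (2 ^ r) ∧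
    (F a (n + r)).coeff k ≤ (((k : ℤ) + 2) * maxA a n k) ^ (2 ^ r) :=
  maxA_growth_general (F_zero_mem_nonnegCoeff a) (isHannerStep_F a) n r k
end

section
/- Let Q ≥ 1 and 0 ≤ p ≤ Q be integers, m ≥ 0, and k ≥ 1. Let T be a plane rooted tree in which every leaf is at depth exactly m, every internal vertex has at most 2^Q children, and the number of internal vertices whose number of children differs from 2^p is at most k. Then |L(T)| ≤ 2^{2Q+2} · 2^{p·m} · k^{1−p/Q}, where |L(T)| is the number of leaves of T and k^{1−p/Q} denotes the real power. (Lemma 4.4, with explicit constant.) -/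
/-- `𝒯_m^K`: plane rooted trees of height exactly `m` (every leaf at depth exactly `m`)
in which every internal vertex has its number of children in `K`. A tree of height `0`
is a single leaf, and a tree of height `m+1` is a root together with a `k`-tuple of
subtrees of height `m`, for some `k ∈ K`. -/
def TreeSet (K : Finset ℕ) : ℕ → Type
  | 0 => PUnit
  | m + 1 => Σ k : K, Fin (k : ℕ) → TreeSet K m

instance instTreeSetFintype (K : Finset ℕ) : (m : ℕ) → Fintype (TreeSet K m)
  | 0 => inferInstanceAs (Fintype PUnit)
  | m + 1 =>
      haveI := instTreeSetFintype K m
      inferInstanceAs (Fintype (Σ k : K, Fin (k : ℕ) → TreeSet K m))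

/-- `|L(T)|`, the number of leaves of the tree `T`. -/
def leaves (K : Finset ℕ) : (m : ℕ) → TreeSet K m → ℕ
  | 0, _ => 1
  | m + 1, T => ∑ i, leaves K m (T.2 i)

/-- `|Int(T)|`, the number of internal (non-leaf) vertices of the tree `T`. -/
def intCount (K : Finset ℕ) : (m : ℕ) → TreeSet K m → ℕ
  | 0, _ => 0
  | m + 1, T => 1 + ∑ i, intCount K m (T.2 i)

/-- `|V(T)|`, the total number of vertices of the tree `T`. -/
def vertCount (K : Finset ℕ) : (m : ℕ) → TreeSet K m → ℕ
  | 0, _ => 1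
  | m + 1, T => 1 + ∑ i, vertCount K m (T.2 i)

/-- The number of internal vertices of `T` whose number of children differs from `d`. -/
def qcount (K : Finset ℕ) (d : ℕ) : (m : ℕ) → TreeSet K m → ℕ
  | 0, _ => 0
  | m + 1, T => (if (T.1 : ℕ) ≠ d then 1 else 0) + ∑ i, qcount K d m (T.2 i)

/-- The weight `W(T) = ∏_{v ∈ Int(T)} C_{deg v}(t)` of a tree (equal to `1` when
`Int(T)` is empty). -/
noncomputable def weight (K : Finset ℕ) (Cf : ℕ → Polynomial ℤ) :
    (m : ℕ) → TreeSet K m → Polynomial ℤ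
  | 0, _ => 1
  | m + 1, T => Cf (T.1 : ℕ) * ∏ i, weight K Cf m (T.2 i)

/-!
Fix a level `J ≤ m`. It has at most `B ^ J` vertices, so if all vertices from there on had `d`
children, there would be at most `d ^ (m - J) * B ^ J` leaves. An exceptional vertex below that
level has at most `B` children, so that it adds at most `B * d ^ (m - J)` leaves, and those above it
are already accounted for by `B ^ J`. The two terms of `d ^ (m - J) * (B ^ J + B * k)` balance when
`B ^ J` lies between `k` and `B * k`, and then `d ^ J = (B ^ J) ^ logb B d` is at least
`k ^ logb B d`.
-/

lemma sum_le_mul_card_mul_add_mul_sum {ι R : Type*} [Fintype ι] [Semiring R] [PartialOrder R]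
    [IsOrderedAddMonoid R] {a b c : R} {f g : ι → R} (h : ∀ i, f i ≤ a * (c + b * g i)) :
    ∑ i, f i ≤ a * (Fintype.card ι * c + b * ∑ i, g i) :=
  calc ∑ i, f i ≤ ∑ i, a * (c + b * g i) := Finset.sum_le_sum fun i _ => h i
    _ = a * (Fintype.card ι * c + b * ∑ i, g i) := by
      simp [← Finset.mul_sum, Finset.sum_add_distrib]

section Tree

variable {K : Finset ℕ} {B d : ℕ}

lemma leaves_le_pow_mul_one_add_mul_qcount (hK : ∀ c ∈ K, c ≤ B) (hd : 1 ≤ d) {m : ℕ}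
    (T : TreeSet K m) : leaves K m T ≤ d ^ m * (1 + B * qcount K d m T) := by
  induction m with
  | zero => simp [leaves, qcount]
  | succ m ih =>
    obtain ⟨c, S⟩ := T
    have root_le : (c : ℕ) ≤ d * (1 + B * if (c : ℕ) ≠ d then 1 else 0) := by
      split_ifs with hc
      · nlinarith [hK c c.2]
      · simp [not_not.mp hc]
    calc ∑ i, leaves K m (S i)
        ≤ d ^ m * (c + B * ∑ i, qcount K d m (S i)) := by
          simpa using sum_le_mul_card_mul_add_mul_sum fun i => ih (S i)
      _ ≤ d ^ m * (d * (1 + B * if (c : ℕ) ≠ d then 1 else 0) +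
            d * (B * ∑ i, qcount K d m (S i))) :=
          Nat.mul_le_mul_left _ (add_le_add root_le (Nat.le_mul_of_pos_left _ hd))
      _ = d ^ (m + 1) * (1 + B * ((if (c : ℕ) ≠ d then 1 else 0) +
            ∑ i, qcount K d m (S i))) := by ring

/-- With `d ^ J` on the left the bound also makes sense for levels `J > m`. -/
lemma pow_mul_leaves_le (hK : ∀ c ∈ K, c ≤ B) (hd : 1 ≤ d) (hdB : d ≤ B) (J : ℕ) {m : ℕ}
    (T : TreeSet K m) :
    d ^ J * leaves K m T ≤ d ^ m * (B ^ J + B * qcount K d m T) := by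
  induction J generalizing m with
  | zero => simpa using leaves_le_pow_mul_one_add_mul_qcount hK hd T
  | succ J ih =>
    cases m with
    | zero => simpa [leaves, qcount] using Nat.pow_le_pow_left hdB (J + 1)
    | succ m =>
      obtain ⟨c, S⟩ := T
      calc d ^ (J + 1) * ∑ i, leaves K m (S i)
          = d * ∑ i, d ^ J * leaves K m (S i) := by rw [← Finset.mul_sum]; ring
        _ ≤ d * (d ^ m * (c * B ^ J + B * ∑ i, qcount K d m (S i))) := by
            gcongr
            simpa using sum_le_mul_card_mul_add_mul_sum fun i => ih (S i)
        _ ≤ d * (d ^ m * (B * B ^ J + B * ((if (c : ℕ) ≠ d then 1 else 0) +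
              ∑ i, qcount K d m (S i)))) := by
            gcongr
            · exact hK c c.2
            · exact Nat.le_add_left _ _
        _ = d ^ (m + 1) * (B ^ (J + 1) + B * ((if (c : ℕ) ≠ d then 1 else 0) +
              ∑ i, qcount K d m (S i))) := by ring

end Tree

lemma rpow_logb_le_pow {b x y : ℝ} {n : ℕ} (hb : 1 < b) (hx : 1 ≤ x) (hy : 0 ≤ y)
    (hyb : y ≤ b ^ n) : y ^ Real.logb b x ≤ x ^ n := by
  have hb₀ : 0 < b := zero_lt_one.trans hb
  calc y ^ Real.logb b x ≤ (b ^ n) ^ Real.logb b x :=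
        Real.rpow_le_rpow hy hyb (Real.logb_nonneg hb hx)
    _ = (b ^ Real.logb b x) ^ n := (Real.rpow_pow_comm hb₀.le _ _).symm
    _ = x ^ n := by rw [Real.rpow_logb hb₀ hb.ne' (zero_lt_one.trans_le hx)]

lemma logb_pow_pow {b : ℝ} (hb₀ : 0 < b) (hb₁ : b ≠ 1) (p q : ℕ) :
    Real.logb (b ^ q) (b ^ p) = p / q := by
  rw [Real.logb, Real.log_pow, Real.log_pow,
    mul_div_mul_right _ _ (Real.log_ne_zero_of_pos_of_ne_one hb₀ hb₁)]

theorem leaves_upper_bound_general {K : Finset ℕ} {B d m : ℕ} {k : ℝ} (hB : 1 < B) (hd : 1 ≤ d)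
    (hdB : d ≤ B) (hK : ∀ c ∈ K, c ≤ B) (hk : 1 ≤ k) (T : TreeSet K m)
    (hq : qcount K d m T ≤ k) :
    (leaves K m T : ℝ) ≤ 2 * B * d ^ m * k ^ (1 - Real.logb B d) := by
  have hk₀ : 0 < k := zero_lt_one.trans_le hk
  have hB' : (1 : ℝ) < B := mod_cast hB
  obtain ⟨J, hJk, hkJ⟩ : ∃ J : ℕ, (B : ℝ) ^ J ≤ k ∧ k < B ^ (J + 1) := exists_nat_pow_near hk hB'
  rw [Real.rpow_sub hk₀, Real.rpow_one, ← mul_div_assoc, le_div_iff₀' (by positivity)]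
  calc k ^ Real.logb B d * leaves K m T ≤ d ^ (J + 1) * leaves K m T := by
        gcongr
        exact rpow_logb_le_pow hB' (mod_cast hd) hk₀.le hkJ.le
    _ ≤ d ^ m * (B ^ (J + 1) + B * qcount K d m T) := mod_cast pow_mul_leaves_le hK hd hdB (J + 1) T
    _ ≤ d ^ m * (B * k + B * k) := by
        rw [pow_succ']
        gcongr
    _ = 2 * B * d ^ m * k := by ring

/-- **Lemma 4.4** (with explicit constant). Let `T` be a plane rooted tree in which
every leaf is at depth exactly `m`, every internal vertex has at least one and at most
`2^Q` children, and the number of internal vertices whose number of children differs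
from `2^p` is at most `k` (with `k ≥ 1`). Then
`|L(T)| ≤ 2^{2Q+2} · 2^{p·m} · k^{1-p/Q}`. -/
theorem leaves_upper_bound (Q p : ℕ) (hQ : 1 ≤ Q) (hpQ : p ≤ Q)
    (m k : ℕ) (hk : 1 ≤ k)
    (T : TreeSet (Finset.Icc 1 (2 ^ Q)) m)
    (hq : qcount (Finset.Icc 1 (2 ^ Q)) (2 ^ p) m T ≤ k) :
    (leaves (Finset.Icc 1 (2 ^ Q)) m T : ℝ) ≤
      2 ^ (2 * Q + 2) * 2 ^ (p * m) * (k : ℝ) ^ (1 - (p : ℝ) / Q) := by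
  have hB : 1 < 2 ^ Q := Nat.one_lt_two_pow (Nat.one_le_iff_ne_zero.mp hQ)
  have hdB : 2 ^ p ≤ 2 ^ Q := Nat.pow_le_pow_right two_pos hpQ
  have bound := leaves_upper_bound_general hB Nat.one_le_two_pow hdB
    (fun _ hc => (Finset.mem_Icc.mp hc).2) (mod_cast hk) T (mod_cast hq : _ ≤ (k : ℝ))
  push_cast at bound
  rw [logb_pow_pow two_pos one_lt_two.ne', ← pow_mul, ← pow_succ'] at bound
  refine bound.trans ?_
  gcongr ?_ * _ * _
  exact pow_le_pow_right₀ one_le_two (by omega)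
end

section
/- Let Q ≥ 1, 0 ≤ p ≤ Q, and λ ≥ 1 be integers, let k ≥ 2λ be an integer, set h = ⌊log_{2^Q}(k/(2λ))⌋, and let m ≥ h. Then (2^Q)^h · (2^p)^{m−h} ≥ 2^{−Q} · (k/(2λ))^{1−p/Q} · 2^{p·m}, where (k/(2λ))^{1−p/Q} denotes the real power. (The leaf-count lower bound for the extremal tree, first part of Lemma 5.3.) -/
/-!
Write `B = 2 ^ Q`, `b = 2 ^ p` and `x = k / (2 * lam)`, so that `p / Q = log_B b` and
`B ^ (1 - p / Q) = B / b`. The choice of `h` gives `x ≤ B ^ (h + 1)`; raising this to the power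
`1 - p / Q ≥ 0` yields `x ^ (1 - p / Q) ≤ (B / b) ^ (h + 1)`. The leaf count is
`(B / b) ^ h * b ^ m`, hence at least `(b / B) * x ^ (1 - p / Q) * b ^ m`, and `b ≥ 1`.
-/

open Real

lemma logb_pow_pow_s12 {a : ℝ} (ha₀ : 0 < a) (ha₁ : a ≠ 1) (m n : ℕ) :
    logb (a ^ m) (a ^ n) = n / m := by
  rw [logb, log_pow, log_pow, mul_div_mul_right _ _ (log_ne_zero_of_pos_of_ne_one ha₀ ha₁)]

lemma lt_pow_floor_logb_add_one {B x : ℝ} (hB : 1 < B) (hx : 0 < x) :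
    x < B ^ (⌊logb B x⌋₊ + 1) := by
  rw [← rpow_natCast, ← logb_lt_iff_lt_rpow hB hx]
  exact_mod_cast Nat.lt_floor_add_one (logb B x)

lemma rpow_one_sub_logb {B b : ℝ} (hB₀ : 0 < B) (hB₁ : B ≠ 1) (hb : 0 < b) :
    B ^ (1 - logb B b) = B / b := by
  rw [rpow_sub hB₀, rpow_one, rpow_logb hB₀ hB₁ hb]

lemma rpow_one_sub_logb_le_div_pow {B b x : ℝ} {n : ℕ} (hB : 1 < B) (hb : 0 < b) (hbB : b ≤ B)
    (hx : 0 ≤ x) (hxB : x ≤ B ^ n) :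
    x ^ (1 - logb B b) ≤ (B / b) ^ n := by
  have hB₀ : 0 < B := one_pos.trans hB
  have hexp : 0 ≤ 1 - logb B b :=
    sub_nonneg.2 ((logb_le_iff_le_rpow hB hb).2 (by rwa [rpow_one]))
  calc x ^ (1 - logb B b)
      ≤ (B ^ n) ^ (1 - logb B b) := rpow_le_rpow hx hxB hexp
    _ = (B ^ (1 - logb B b)) ^ n := (rpow_pow_comm hB₀.le _ n).symm
    _ = (B / b) ^ n := by rw [rpow_one_sub_logb hB₀ hB.ne' hb]

theorem extremal_tree_leaf_bound_general {B b x : ℝ} {h m : ℕ} (hB : 1 < B) (hb : 0 < b)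
    (hbB : b ≤ B) (hx : 0 ≤ x) (hxB : x ≤ B ^ (h + 1)) (hm : h ≤ m) :
    b / B * x ^ (1 - logb B b) * b ^ m ≤ B ^ h * b ^ (m - h) := by
  have hB₀ : 0 < B := one_pos.trans hB
  calc b / B * x ^ (1 - logb B b) * b ^ m
      ≤ b / B * (B / b) ^ (h + 1) * b ^ m := by
        gcongr
        exact rpow_one_sub_logb_le_div_pow hB hb hbB hx hxB
    _ = b / B * (B / b) ^ (h + 1) * (b ^ h * b ^ (m - h)) := by rw [pow_mul_pow_sub b hm]
    _ = b / B * (B / b) * (B / b * b) ^ h * b ^ (m - h) := by ring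
    _ = B ^ h * b ^ (m - h) := by
        rw [div_mul_div_cancel₀ hB₀.ne', div_self hb.ne', one_mul, div_mul_cancel₀ B hb.ne']

/-- **The leaf-count lower bound for the extremal tree** (first part of Lemma 5.3).
For integers `Q ≥ 1`, `0 ≤ p ≤ Q`, `λ ≥ 1`, `k ≥ 2λ`, with
`h = ⌊log_{2^Q}(k/(2λ))⌋` and `m ≥ h`, the number
`(2^Q)^h · (2^p)^{m-h}` of leaves of the tree of height `m` in which every internal
vertex at depth `< h` has `2^Q` children and every internal vertex at depth `≥ h` has
`2^p` children satisfies
`(2^Q)^h · (2^p)^{m-h} ≥ 2^{-Q} · (k/(2λ))^{1-p/Q} · 2^{p·m}`. -/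
theorem extremal_tree_leaf_bound (Q p lam k : ℕ) (hQ : 1 ≤ Q) (hpQ : p ≤ Q)
    (hlam : 1 ≤ lam) (hk : 2 * lam ≤ k) (h m : ℕ)
    (hh : h = ⌊Real.logb ((2 : ℝ) ^ Q) ((k : ℝ) / (2 * lam))⌋₊) (hm : h ≤ m) :
    (2 : ℝ) ^ (-(Q : ℝ)) * ((k : ℝ) / (2 * lam)) ^ (1 - (p : ℝ) / Q) *
        (2 : ℝ) ^ (p * m) ≤
      ((2 : ℝ) ^ Q) ^ h * ((2 : ℝ) ^ p) ^ (m - h) := by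
  have hlam₀ : (0 : ℝ) < 2 * lam := by positivity
  have hk₀ : (0 : ℝ) < k := hlam₀.trans_le (by exact_mod_cast hk)
  have hx : 0 < (k : ℝ) / (2 * lam) := div_pos hk₀ hlam₀
  have hB : (1 : ℝ) < 2 ^ Q := one_lt_pow₀ one_lt_two (Nat.one_le_iff_ne_zero.1 hQ)
  have hb : (1 : ℝ) ≤ 2 ^ p := one_le_pow₀ one_le_two
  have hbB : (2 : ℝ) ^ p ≤ 2 ^ Q := pow_le_pow_right₀ one_le_two hpQ
  have hinv : ((2 : ℝ) ^ Q)⁻¹ ≤ 2 ^ p / 2 ^ Q := by rw [inv_eq_one_div]; gcongr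
  have hxB : (k : ℝ) / (2 * lam) ≤ (2 ^ Q) ^ (h + 1) := hh ▸ (lt_pow_floor_logb_add_one hB hx).le
  rw [rpow_neg zero_le_two, rpow_natCast, pow_mul, ← logb_pow_pow_s12 two_pos (by norm_num) Q p]
  refine le_trans ?_ (extremal_tree_leaf_bound_general hB (one_pos.trans_le hb) hbB hx.le hxB hm)
  gcongr
end

section
/- There is an absolute constant C > 0 with the following property. Let Q ≥ 2, let φ ∈ (ℤ[t])[x] be obtained from x by applying Q maps each equal to S or R, with p of them equal to S where 1 ≤ p ≤ Q−1, and define H_0(t) = 2 + t, H_{m+1} = φ(H_m). Let δ ∈ (0,1). Then for all sufficiently large m (depending on Q and δ), setting k = ⌊2^{δQm}⌋, one has log₂([t^k]H_m) ≥ 2^{−C·Q} · 2^{p·m} · k^{1−p/Q}. (Proposition 5.1, lower bound on the coefficients.) -/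
/-!
Compare polynomials with nonnegative coefficients coefficientwise. Keeping one summand of
`R(g) = t·g² + g + g` shows that `R(g)` dominates both `g` and `t·g²`, while `S(g) = g²`. Hence
`φ(g)` dominates `g ^ 2^p` (keep `g` at each `R`) and also `t^a · g ^ 2^Q` for some `a < 2^Q`
(keep `t·g²` at each `R`).

Given `k`, choose `r` with `2^(Qr) ≤ k < 2^(Q(r+1))`, and use the first bound for the first `m - r`
iterations and the second for the last `r`: `H_m` dominates `t^a · (2 + t)^N` with
`N = 2^(p(m-r) + Qr)` and `a < 2^(Qr) ≤ k`. As soon as `2k ≤ N`, the coefficient of `t^k` is at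
least `2^(N-k) ≥ 2^(N/2)`, and `k < 2^(Q(r+1))` gives `N ≥ 2^(p-Q) · 2^(pm) · k^(1-p/Q)`.
-/

/-- One substitution step on `(ℤ[t])[x]`: `S(g) = g²` when the flag is `true`, and
`R(g) = t·g² + 2g` when it is `false` (here `t = C X` is a scalar of the coefficient
ring `ℤ[t]`). -/
noncomputable def stepSR (b : Bool) (g : Polynomial (Polynomial ℤ)) :
    Polynomial (Polynomial ℤ) :=
  if b then g ^ 2 else Polynomial.C Polynomial.X * g ^ 2 + 2 * g

/-- The composite `φ = T_{Q-1}(T_{Q-2}(⋯T_0(x)⋯)) ∈ (ℤ[t])[x]`, where `T_i = S` if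
`Tseq i = true` and `T_i = R` otherwise; `compSR Tseq Q` is the result of applying the
`Q` maps `T_0, …, T_{Q-1}` to `x`. -/
noncomputable def compSR (Tseq : ℕ → Bool) : ℕ → Polynomial (Polynomial ℤ)
  | 0 => Polynomial.X
  | n + 1 => stepSR (Tseq n) (compSR Tseq n)

open Filter Polynomial

section CoeffLE

variable {R : Type*} [Semiring R] [PartialOrder R]

/-- Coefficientwise domination of polynomials, `g` being a majorant of `f`. The nonnegativity of
the coefficients of `f` is part of the notion, so that domination is compatible with products; thus
`CoeffLE 0 g` says that `g` has nonnegative coefficients. -/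
def CoeffLE (f g : R[X]) : Prop :=
  ∀ n, 0 ≤ f.coeff n ∧ f.coeff n ≤ g.coeff n

namespace CoeffLE

variable {f g f' g' : R[X]}

lemma zero_left (h : CoeffLE f g) : CoeffLE 0 g :=
  fun n ↦ ⟨by simp, by simpa using (h n).1.trans (h n).2⟩

lemma refl_C {r : R} (hr : 0 ≤ r) : CoeffLE (C r) (C r) := by
  intro n
  rw [coeff_C]
  split_ifs <;> simp [hr]

variable [IsOrderedRing R]

lemma add (h : CoeffLE f g) (h' : CoeffLE f' g') : CoeffLE (f + f') (g + g') := by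
  intro n
  simp only [coeff_add]
  exact ⟨add_nonneg (h n).1 (h' n).1, add_le_add (h n).2 (h' n).2⟩

lemma add_left (h : CoeffLE f g) (h' : CoeffLE 0 g') : CoeffLE f (g' + g) := by
  simpa using h'.add h

lemma add_right (h : CoeffLE f g) (h' : CoeffLE 0 g') : CoeffLE f (g + g') := by
  simpa using h.add h'

lemma mul (h : CoeffLE f g) (h' : CoeffLE f' g') : CoeffLE (f * f') (g * g') := by
  intro n
  simp only [coeff_mul]
  exact ⟨Finset.sum_nonneg fun x _ ↦ mul_nonneg (h _).1 (h' _).1,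
    Finset.sum_le_sum fun x _ ↦ mul_le_mul (h _).2 (h' _).2 (h' _).1 ((h _).1.trans (h _).2)⟩

lemma refl_X : CoeffLE (X : R[X]) X := by
  intro n
  rw [coeff_X]
  split_ifs <;> simp

lemma pow (h : CoeffLE f g) (n : ℕ) : CoeffLE (f ^ n) (g ^ n) := by
  induction n with
  | zero => simpa using refl_C (zero_le_one' R)
  | succ n ih => simpa only [pow_succ] using ih.mul h

end CoeffLE

lemma pow_sub_le_coeff_X_add_C_pow [IsOrderedRing R] {r : R} (hr : 0 ≤ r) {n k : ℕ} (hk : k ≤ n) :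
    r ^ (n - k) ≤ ((X + C r) ^ n).coeff k := by
  have hchoose : (1 : R) ≤ n.choose k := by
    simpa using Nat.mono_cast (α := R) (Nat.choose_pos hk)
  rw [coeff_X_add_C_pow]
  exact le_mul_of_one_le_right (pow_nonneg hr _) hchoose

lemma CoeffLE.sub_le_logb_coeff {g : ℤ[X]} {a N k : ℕ}
    (h : CoeffLE (X ^ a * (X + C 2) ^ N) g) (hak : a ≤ k) (hkN : k ≤ N) :
    (N - k : ℝ) ≤ Real.logb 2 (g.coeff k) := by
  have hcoeff : (2 : ℤ) ^ (N - k) ≤ g.coeff k :=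
    calc (2 : ℤ) ^ (N - k)
      _ ≤ 2 ^ (N - (k - a)) := pow_le_pow_right₀ one_le_two (by omega)
      _ ≤ ((X + C 2) ^ N : ℤ[X]).coeff (k - a) :=
        pow_sub_le_coeff_X_add_C_pow zero_le_two (by omega)
      _ = (X ^ a * (X + C 2) ^ N : ℤ[X]).coeff k := by rw [coeff_X_pow_mul', if_pos hak]
      _ ≤ g.coeff k := (h k).2
  have hcoeff' : (2 : ℝ) ^ (N - k) ≤ g.coeff k := mod_cast hcoeff
  calc (N - k : ℝ)
    _ = Real.logb 2 (2 ^ (N - k)) := by simp [Real.logb_pow, hkN]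
    _ ≤ Real.logb 2 (g.coeff k) := Real.logb_le_logb_of_le one_lt_two (by positivity) hcoeff'

end CoeffLE

section compSR

variable {T : ℕ → Bool} {f g : ℤ[X]}

lemma eval_compSR_succ (T : ℕ → Bool) (g : ℤ[X]) (n : ℕ) :
    (compSR T (n + 1)).eval g =
      if T n then (compSR T n).eval g ^ 2
      else X * (compSR T n).eval g ^ 2 + 2 * (compSR T n).eval g := by
  rw [compSR, stepSR]
  split_ifs <;> simp

lemma CoeffLE.pow_two_pow_count_compSR (h : CoeffLE f g) (n : ℕ) :
    CoeffLE (f ^ 2 ^ Nat.count (fun i ↦ T i = true) n) ((compSR T n).eval g) := by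
  induction n with
  | zero => simpa [compSR] using h
  | succ n ih =>
    rw [eval_compSR_succ, Nat.count_succ]
    split_ifs
    · rw [pow_succ, pow_mul]
      exact ih.pow 2
    · rw [add_zero, two_mul]
      exact (ih.add_right ih.zero_left).add_left (refl_X.mul (ih.pow 2)).zero_left

lemma CoeffLE.exists_X_pow_mul_pow_compSR (h : CoeffLE f g) (n : ℕ) :
    ∃ a < 2 ^ n, CoeffLE (X ^ a * f ^ 2 ^ n) ((compSR T n).eval g) := by
  induction n with
  | zero => exact ⟨0, by simp, by simpa [compSR] using h⟩
  | succ n ih =>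
    obtain ⟨a, ha, hle⟩ := ih
    rw [eval_compSR_succ]
    split_ifs
    · refine ⟨2 * a, by omega, ?_⟩
      convert hle.pow 2 using 1
      ring
    · refine ⟨2 * a + 1, by omega, ?_⟩
      rw [two_mul ((compSR T n).eval g)]
      convert (refl_X.mul (hle.pow 2)).add_right (hle.zero_left.add_right hle.zero_left) using 1
      ring

variable {Q p : ℕ} {H : ℕ → ℤ[X]}

lemma CoeffLE.pow_two_pow_iterate (hp : Nat.count (fun i ↦ T i = true) Q = p)
    (hH : ∀ m, H (m + 1) = (compSR T Q).eval (H m)) (h : CoeffLE f (H 0)) (m : ℕ) :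
    CoeffLE (f ^ 2 ^ (p * m)) (H m) := by
  induction m with
  | zero => simpa using h
  | succ m ih =>
    rw [hH, Nat.mul_succ, pow_add, pow_mul, ← hp]
    exact (hp ▸ ih).pow_two_pow_count_compSR Q

lemma CoeffLE.exists_X_pow_mul_pow_iterate
    (hH : ∀ m, H (m + 1) = (compSR T Q).eval (H m)) (h : CoeffLE f (H 0)) (m : ℕ) :
    ∃ a < 2 ^ (Q * m), CoeffLE (X ^ a * f ^ 2 ^ (Q * m)) (H m) := by
  induction m with
  | zero => exact ⟨0, by simp, by simpa using h⟩
  | succ m ih =>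
    obtain ⟨a, ha, hle⟩ := ih
    obtain ⟨b, hb, hle'⟩ := hle.exists_X_pow_mul_pow_compSR (T := T) Q
    refine ⟨b + a * 2 ^ Q, ?_, ?_⟩
    · calc b + a * 2 ^ Q
        _ < (a + 1) * 2 ^ Q := by linarith
        _ ≤ 2 ^ (Q * m) * 2 ^ Q := by gcongr; exact ha
        _ = 2 ^ (Q * (m + 1)) := by ring
    · rw [hH]
      convert hle' using 1
      ring

lemma two_pow_div_two_le_logb_coeff (hp : Nat.count (fun i ↦ T i = true) Q = p)
    (hH : ∀ m, H (m + 1) = (compSR T Q).eval (H m)) (h : CoeffLE (X + C 2) (H 0))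
    {m r k : ℕ} (hm : Q < p * m) (hrk : 2 ^ (Q * r) ≤ k) (hkr : k < 2 ^ (Q * (r + 1))) :
    (2 : ℝ) ^ (p * m + Q * r) / 2 ≤ Real.logb 2 ((H (m + r)).coeff k) := by
  obtain ⟨a, ha, hle⟩ := CoeffLE.exists_X_pow_mul_pow_iterate (H := fun r ↦ H (m + r))
    (fun r ↦ hH (m + r)) (h.pow_two_pow_iterate hp hH m) r
  rw [← pow_mul, ← pow_add] at hle
  have hk : 2 * k ≤ 2 ^ (p * m + Q * r) :=
    calc 2 * k
      _ ≤ 2 * 2 ^ (Q * (r + 1)) := by gcongr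
      _ = 2 ^ (Q * r + Q + 1) := by ring
      _ ≤ 2 ^ (p * m + Q * r) := Nat.pow_le_pow_right two_pos (by omega)
  have hk' : (2 * k : ℝ) ≤ 2 ^ (p * m + Q * r) := mod_cast hk
  calc (2 : ℝ) ^ (p * m + Q * r) / 2
    _ ≤ (2 ^ (p * m + Q * r) : ℕ) - (k : ℝ) := by push_cast; linarith
    _ ≤ Real.logb 2 ((H (m + r)).coeff k) := hle.sub_le_logb_coeff (by omega) (by omega)

end compSR

lemma rpow_one_sub_div_le_two_pow {Q p s : ℕ} {x : ℝ} (hQ : Q ≠ 0) (hpQ : p ≤ Q) (hx0 : 0 ≤ x)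
    (hx : x ≤ 2 ^ (Q * s)) : x ^ (1 - (p : ℝ) / Q) ≤ 2 ^ ((Q - p) * s) := by
  have hexp : (1 - (p : ℝ) / Q) = (Q - p : ℕ) / Q := by
    rw [Nat.cast_sub hpQ]
    field_simp
  calc x ^ (1 - (p : ℝ) / Q)
    _ ≤ ((2 : ℝ) ^ (Q * s)) ^ (1 - (p : ℝ) / Q) := by
      refine Real.rpow_le_rpow hx0 hx ?_
      rw [hexp]
      positivity
    _ = 2 ^ ((Q - p) * s) := by
      rw [hexp, ← Real.rpow_natCast 2, ← Real.rpow_mul zero_le_two, ← Real.rpow_natCast 2]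
      congr 1
      push_cast
      field_simp

lemma two_rpow_mul_rpow_le_two_pow_div_two {Q p m r : ℕ} {x : ℝ} (hp : 1 ≤ p) (hpQ : p ≤ Q)
    (hx0 : 0 ≤ x) (hx : x ≤ 2 ^ (Q * (r + 1))) :
    (2 : ℝ) ^ (-(Q : ℝ)) * 2 ^ (p * (m + r)) * x ^ (1 - (p : ℝ) / Q) ≤
      2 ^ (p * m + Q * r) / 2 := by
  obtain ⟨d, rfl⟩ := Nat.exists_eq_add_of_le hpQ
  have hx' := rpow_one_sub_div_le_two_pow (by omega) hpQ hx0 hx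
  rw [Nat.add_sub_cancel_left] at hx'
  have h2p : (2 : ℝ) ≤ 2 ^ p := le_self_pow₀ one_le_two (by omega)
  calc (2 : ℝ) ^ (-((p + d : ℕ) : ℝ)) * 2 ^ (p * (m + r)) * x ^ (1 - (p : ℝ) / (p + d : ℕ))
    _ ≤ (2 : ℝ) ^ (-((p + d : ℕ) : ℝ)) * 2 ^ (p * (m + r)) * 2 ^ (d * (r + 1)) := by gcongr
    _ = 2 ^ (p * m + (p + d) * r) / 2 ^ p := by
      rw [Real.rpow_neg zero_le_two, Real.rpow_natCast]
      field_simp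
      ring
    _ ≤ 2 ^ (p * m + (p + d) * r) / 2 := by gcongr

lemma eventually_floor_two_rpow_lt {Q : ℕ} (hQ : Q ≠ 0) (c : ℕ) {δ : ℝ} (hδ : δ < 1) :
    ∀ᶠ m : ℕ in atTop, ⌊(2 : ℝ) ^ (δ * Q * m)⌋₊ < 2 ^ (Q * (m - c)) := by
  have hlim : Tendsto (fun m : ℕ ↦ (1 - δ) * m) atTop atTop :=
    tendsto_natCast_atTop_atTop.const_mul_atTop (sub_pos.2 hδ)
  filter_upwards [hlim.eventually_gt_atTop (c : ℝ), eventually_ge_atTop c] with m hm hcm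
  rw [Nat.floor_lt (by positivity)]
  push_cast
  rw [← Real.rpow_natCast, Real.rpow_lt_rpow_left_iff one_lt_two]
  push_cast [hcm]
  have hQ' : (0 : ℝ) < Q := by positivity
  nlinarith

theorem coeff_lower_bound_general {T : ℕ → Bool} {Q p : ℕ}
    (hp : Nat.count (fun i ↦ T i = true) Q = p) (hp1 : 1 ≤ p) {H : ℕ → ℤ[X]}
    (h0 : CoeffLE (X + C 2) (H 0)) (hH : ∀ m, H (m + 1) = (compSR T Q).eval (H m))
    {m k : ℕ} (hk0 : k ≠ 0) (hk : k < 2 ^ (Q * (m - Q))) :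
    (2 : ℝ) ^ (-(Q : ℝ)) * 2 ^ (p * m) * (k : ℝ) ^ (1 - (p : ℝ) / Q) ≤
      Real.logb 2 ((H m).coeff k) := by
  have hpQ : p ≤ Q := hp ▸ Nat.count_le _
  obtain ⟨r, hrk, hkr⟩ : ∃ r, 2 ^ (Q * r) ≤ k ∧ k < 2 ^ (Q * (r + 1)) := by
    simp only [pow_mul]
    exact ⟨_, Nat.pow_log_le_self _ hk0,
      Nat.lt_pow_succ_log_self (Nat.one_lt_two_pow (by omega)) k⟩
  have hr : r < m - Q :=
    Nat.lt_of_mul_lt_mul_left ((Nat.pow_lt_pow_iff_right one_lt_two).1 (hrk.trans_lt hk))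
  obtain ⟨n, rfl⟩ := Nat.exists_eq_add_of_le' (show r ≤ m by omega)
  have hn : Q < p * n := (show Q < n by omega).trans_le (Nat.le_mul_of_pos_left n hp1)
  exact (two_rpow_mul_rpow_le_two_pow_div_two hp1 hpQ k.cast_nonneg (mod_cast hkr.le)).trans
    (two_pow_div_two_le_logb_coeff hp hH h0 hn hrk hkr)

/-- **Proposition 5.1** (lower bound on the coefficients). There is an absolute
constant `C > 0` such that: if `φ` is obtained from `x` by applying `Q ≥ 2` maps each
equal to `S` or `R`, `p` of them equal to `S` with `1 ≤ p ≤ Q - 1`, `H_0 = 2 + t`,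
`H_{m+1} = φ(H_m)`, and `δ ∈ (0,1)`, then for all sufficiently large `m` (depending
on `Q` and `δ`), with `k = ⌊2^{δQm}⌋`,
`log₂([t^k] H_m) ≥ 2^{-C·Q} · 2^{p·m} · k^{1 - p/Q}`. -/
theorem coeff_lower_bound :
    ∃ C : ℝ, 0 < C ∧
      ∀ (Q : ℕ), 2 ≤ Q → ∀ (Tseq : ℕ → Bool) (p : ℕ),
        p = ((Finset.range Q).filter fun i => Tseq i = true).card →
        1 ≤ p → p ≤ Q - 1 →
        ∀ (H : ℕ → Polynomial ℤ), H 0 = 2 + Polynomial.X →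
          (∀ m, H (m + 1) = Polynomial.eval (H m) (compSR Tseq Q)) →
          ∀ δ : ℝ, δ ∈ Set.Ioo (0 : ℝ) 1 →
            ∃ M : ℕ, ∀ m, M ≤ m →
              (2 : ℝ) ^ (-(C * Q)) * (2 : ℝ) ^ (p * m) *
                  (⌊(2 : ℝ) ^ (δ * Q * m)⌋₊ : ℝ) ^ (1 - (p : ℝ) / Q) ≤
                Real.logb 2 (((H m).coeff ⌊(2 : ℝ) ^ (δ * Q * m)⌋₊ : ℝ)) := by
  refine ⟨1, one_pos, fun Q hQ T p hp hp1 _ H h0 hH δ ⟨hδ0, hδ1⟩ ↦ ?_⟩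
  obtain ⟨M, hM⟩ := eventually_atTop.1 (eventually_floor_two_rpow_lt (by omega : Q ≠ 0) Q hδ1)
  have hH0 : CoeffLE (X + C 2) (H 0) := by
    simpa [h0, add_comm] using CoeffLE.refl_X.add (CoeffLE.refl_C (zero_le_two (α := ℤ)))
  have hcount : Nat.count (fun i ↦ T i = true) Q = p := by
    rw [hp, Nat.count_eq_card_filter_range]
  refine ⟨M, fun m hm ↦ ?_⟩
  have hfloor : ⌊(2 : ℝ) ^ (δ * Q * m)⌋₊ ≠ 0 :=
    (Nat.floor_pos.2 (Real.one_le_rpow one_le_two (by positivity))).ne'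
  simpa only [one_mul] using coeff_lower_bound_general hcount hp1 hH0 hH hfloor (hM m hm)
end

section
/- For every integer Q ≥ 1 and all n, writing n = Qm + r with m = ⌊n/Q⌋ and 0 ≤ r < Q, and setting A_{n,k} = max_{0 ≤ j ≤ k} a_{n,j}, one has for every k ≥ 0: a_{Qm,k} ≤ a_{Qm+r,k} ≤ ((k+2)·A_{Qm,k})^{2^r}. (Proposition 6.1, the transfer of coefficient bounds from dimension 2^{Qm} to dimension 2^n, with explicit constant (k+2).) -/
/-!
The coefficients are nonnegative and the constant one stays at least `1`, so no step decreases a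
coefficient. Conversely, let `M` bound the coefficients of `p` of index at most `k`. Each
coefficient of `p ^ 2` of index at most `k` is a sum of at most `k + 1` products, hence at most
`(k + 1) * M ^ 2`. In `X * p ^ 2 + 2 * p` the shift saves one product, and the extra term is at
most `2 * M ≤ 2 * M ^ 2`. So either step replaces `M` by `(k + 2) * M ^ 2`, which squares
`(k + 2) * M`.
-/

section HannerSequences

open Polynomial Finset.HasAntidiagonal

section Semiring

variable {R : Type*} [Semiring R]

/-- `q` arises from `p` by one step of the Hanner-type construction: `p ^ 2` is the product step
and `X * p ^ 2 + 2 * p` the convex hull step. -/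
def HannerStep (p q : R[X]) : Prop :=
  q = p ^ 2 ∨ q = X * p ^ 2 + 2 * p

variable [PartialOrder R]

/-- A sequence of polynomials obtained by steps of the Hanner-type construction, of either kind and
in any order. In place of `F_0 = t + 2` it may start from any polynomial with nonnegative
coefficients and constant coefficient at least `1`. -/
structure IsHannerSequence (p : ℕ → R[X]) : Prop where
  coeff_init_nonneg : ∀ i, 0 ≤ (p 0).coeff i
  one_le_coeff_init : 1 ≤ (p 0).coeff 0
  step : ∀ n, HannerStep (p n) (p (n + 1))

variable [IsOrderedRing R] {p q : R[X]} {M : R} {k : ℕ}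

theorem coeff_sq_nonneg (hp : ∀ i, 0 ≤ p.coeff i) (k : ℕ) : 0 ≤ (p ^ 2).coeff k := by
  rw [sq, coeff_mul]
  exact Finset.sum_nonneg fun x _ => mul_nonneg (hp x.1) (hp x.2)

theorem coeff_zero_mul_coeff_le_coeff_sq (hp : ∀ i, 0 ≤ p.coeff i) (k : ℕ) :
    p.coeff 0 * p.coeff k ≤ (p ^ 2).coeff k := by
  rw [sq, coeff_mul]
  exact Finset.single_le_sum (f := fun x : ℕ × ℕ => p.coeff x.1 * p.coeff x.2)
    (fun x _ => mul_nonneg (hp x.1) (hp x.2)) (a := (0, k)) (by simp)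

theorem coeff_sq_le (hp : ∀ i, 0 ≤ p.coeff i) (hM : ∀ i ≤ k, p.coeff i ≤ M) :
    (p ^ 2).coeff k ≤ (k + 1) * M ^ 2 := by
  have hM₀ : 0 ≤ M := (hp 0).trans (hM 0 k.zero_le)
  have hterm : ∀ x ∈ antidiagonal k, p.coeff x.1 * p.coeff x.2 ≤ M ^ 2 := by
    intro x hx
    rw [sq]
    exact mul_le_mul (hM _ (antidiagonal.fst_le hx)) (hM _ (antidiagonal.snd_le hx)) (hp _) hM₀
  rw [sq, coeff_mul]
  simpa using Finset.sum_le_card_nsmul _ _ _ hterm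

namespace HannerStep

theorem coeff_nonneg (h : HannerStep p q) (hp : ∀ i, 0 ≤ p.coeff i) (k : ℕ) :
    0 ≤ q.coeff k := by
  obtain rfl | rfl := h
  · exact coeff_sq_nonneg hp k
  · rw [coeff_add, coeff_ofNat_mul]
    refine add_nonneg ?_ (mul_nonneg zero_le_two (hp k))
    cases k with
    | zero => rw [coeff_X_mul_zero]
    | succ k =>
      rw [coeff_X_mul]
      exact coeff_sq_nonneg hp k

theorem coeff_le_coeff (h : HannerStep p q) (hp : ∀ i, 0 ≤ p.coeff i) (hp₀ : 1 ≤ p.coeff 0)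
    (k : ℕ) : p.coeff k ≤ q.coeff k := by
  obtain rfl | rfl := h
  · exact (le_mul_of_one_le_left (hp k) hp₀).trans (coeff_zero_mul_coeff_le_coeff_sq hp k)
  · have hdouble : p.coeff k ≤ 2 * p.coeff k := le_mul_of_one_le_left (hp k) one_le_two
    rw [coeff_add, coeff_ofNat_mul]
    cases k with
    | zero => rwa [coeff_X_mul_zero, zero_add]
    | succ k =>
      rw [coeff_X_mul]
      exact hdouble.trans (le_add_of_nonneg_left (coeff_sq_nonneg hp k))

theorem coeff_le (h : HannerStep p q) (hp : ∀ i, 0 ≤ p.coeff i) (hp₀ : 1 ≤ p.coeff 0)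
    (hM : ∀ i ≤ k, p.coeff i ≤ M) : q.coeff k ≤ (k + 2) * M ^ 2 := by
  have hM₁ : 1 ≤ M := hp₀.trans (hM 0 k.zero_le)
  have hM₂ : 0 ≤ M ^ 2 := pow_nonneg (zero_le_one.trans hM₁) 2
  obtain rfl | rfl := h
  · calc (p ^ 2).coeff k ≤ (k + 1) * M ^ 2 := coeff_sq_le hp hM
      _ ≤ (k + 2) * M ^ 2 := by gcongr; exact one_le_two
  · have hdouble : 2 * p.coeff k ≤ 2 * M ^ 2 := by
      have hMM : M ≤ M ^ 2 := le_self_pow₀ hM₁ two_ne_zero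
      exact mul_le_mul_of_nonneg_left ((hM k le_rfl).trans hMM) zero_le_two
    rw [coeff_add, coeff_ofNat_mul, add_mul]
    gcongr
    cases k with
    | zero => simp
    | succ k =>
      rw [coeff_X_mul, Nat.cast_succ]
      exact coeff_sq_le hp fun i hi => hM i (hi.trans k.le_succ)

end HannerStep

namespace IsHannerSequence

variable {p : ℕ → R[X]}

theorem coeff_nonneg (hp : IsHannerSequence p) (n i : ℕ) : 0 ≤ (p n).coeff i := by
  induction n generalizing i with
  | zero => exact hp.coeff_init_nonneg i
  | succ n ih => exact (hp.step n).coeff_nonneg ih i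

theorem one_le_coeff_zero (hp : IsHannerSequence p) (n : ℕ) : 1 ≤ (p n).coeff 0 := by
  induction n with
  | zero => exact hp.one_le_coeff_init
  | succ n ih => exact ih.trans ((hp.step n).coeff_le_coeff (hp.coeff_nonneg n) ih 0)

theorem monotone_coeff (hp : IsHannerSequence p) (k : ℕ) : Monotone fun n => (p n).coeff k :=
  monotone_nat_of_le_succ fun n =>
    (hp.step n).coeff_le_coeff (hp.coeff_nonneg n) (hp.one_le_coeff_zero n) k

end IsHannerSequence

end Semiring

section CommSemiring

variable {R : Type*} [CommSemiring R]

theorem IsHannerSequence.coeff_add_le [PartialOrder R] [IsOrderedRing R] {p : ℕ → R[X]} {M : R}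
    {N k : ℕ} (hp : IsHannerSequence p) (hM : ∀ i ≤ k, (p N).coeff i ≤ M) (r : ℕ) :
    ∀ i ≤ k, (p (N + r)).coeff i ≤ (k + 2) ^ (2 ^ r - 1) * M ^ 2 ^ r := by
  induction r with
  | zero => simpa using hM
  | succ r ih =>
    intro i hi
    set B : R := (k + 2) ^ (2 ^ r - 1) * M ^ 2 ^ r with hB
    have hB₀ : 0 ≤ B := (hp.coeff_nonneg (N + r) 0).trans (ih 0 k.zero_le)
    have hexp : 2 ^ (r + 1) - 1 = 2 * (2 ^ r - 1) + 1 := by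
      have := Nat.one_le_two_pow (n := r)
      omega
    calc (p (N + r + 1)).coeff i ≤ (i + 2) * B ^ 2 :=
          (hp.step (N + r)).coeff_le (hp.coeff_nonneg _) (hp.one_le_coeff_zero _)
            fun j hj => ih j (hj.trans hi)
      _ ≤ (k + 2) * B ^ 2 := by gcongr
      _ = (k + 2) ^ (2 ^ (r + 1) - 1) * M ^ 2 ^ (r + 1) := by rw [hB, hexp]; ring

theorem coeff_transfer_general [LinearOrder R] [IsOrderedRing R] {p : ℕ → R[X]}
    (hp : IsHannerSequence p) (N r k : ℕ) :
    (p N).coeff k ≤ (p (N + r)).coeff k ∧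
    (p (N + r)).coeff k ≤ ((k + 2) * (Finset.range (k + 1)).sup' Finset.nonempty_range_add_one
      fun j => (p N).coeff j) ^ 2 ^ r := by
  refine ⟨hp.monotone_coeff k (N.le_add_right r), ?_⟩
  set M : R := (Finset.range (k + 1)).sup' Finset.nonempty_range_add_one fun j => (p N).coeff j
  have hM : ∀ i ≤ k, (p N).coeff i ≤ M := fun i hi =>
    Finset.le_sup' (fun j => (p N).coeff j) (Finset.mem_range_succ_iff.2 hi)
  have hM₀ : 0 ≤ M := (hp.coeff_nonneg N 0).trans (hM 0 k.zero_le)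
  have hk : (1 : R) ≤ k + 2 := one_le_two.trans (le_add_of_nonneg_left k.cast_nonneg)
  calc (p (N + r)).coeff k ≤ (k + 2) ^ (2 ^ r - 1) * M ^ 2 ^ r := hp.coeff_add_le hM r k le_rfl
    _ ≤ (k + 2) ^ 2 ^ r * M ^ 2 ^ r := by
      gcongr
      exact Nat.sub_le _ _
    _ = ((k + 2) * M) ^ 2 ^ r := (mul_pow _ _ _).symm

end CommSemiring

theorem hannerStep_F (a : ℝ) (n : ℕ) : HannerStep (F a n) (F a (n + 1)) := by
  rw [HannerStep, F]
  split_ifs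
  exacts [Or.inl rfl, Or.inr rfl]

theorem isHannerSequence_F (a : ℝ) : IsHannerSequence (F a) where
  coeff_init_nonneg i := by
    rcases i with _ | _ | i <;> simp [F, coeff_X]
  one_le_coeff_init := by simp [F]
  step := hannerStep_F a

end HannerSequences

/-- **Proposition 6.1** (transfer from dimension `2^{Qm}` to dimension `2^n`, with
explicit constant `k+2`). Writing `n = Qm + r` with `m = ⌊n/Q⌋` and `0 ≤ r < Q`,
for every `k ≥ 0`: `a_{Qm,k} ≤ a_{Qm+r,k} ≤ ((k+2)·A_{Qm,k})^(2^r)`. -/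
theorem coeff_transfer (a : ℝ) (ha : a ∈ Set.Ioo (0 : ℝ) 1) (Q : ℕ) (hQ : 1 ≤ Q)
    (n k : ℕ) (m r : ℕ) (hm : m = n / Q) (hr : r = n % Q) :
    (F a (Q * m)).coeff k ≤ (F a (Q * m + r)).coeff k ∧
    (F a (Q * m + r)).coeff k ≤ (((k : ℤ) + 2) * maxA a (Q * m) k) ^ (2 ^ r) :=
  coeff_transfer_general (isHannerSequence_F a) (Q * m) r k
end

section
/- Let a ∈ (0,1) be rational and δ ∈ (0,1). Then there exists a constant C > 0 depending only on a and δ, and for every integer n ≥ 2 a polytope P_n ⊂ ℝ^n, such that log₂|ℱ(P_n)| ≤ C·n^{1−a}, log₂|V(P_n)| ≤ C·n^{a+δ(1−a)}, and (R(P_n)/r(P_n))² ≤ C·n^{1−δ+a}; consequently log₂|V(P_n)| · log₂|ℱ(P_n)| · (R(P_n)/r(P_n))² ≤ C³·n^{2+a(1−δ)}. (Theorem 1.3, part 1.) -/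
/-!
The unit ball of the Marcinkiewicz norm on `ℝ^s` with weights `1, 1/√2, …, 1/√s` has at most
`s! * 2 ^ s` vertices, all of Euclidean norm `O(√(log s))`, and its polar, a Lorentz ball, is
generated by at most `4 ^ s` vectors of norm at most `1`. The Cartesian power of `k` copies
multiplies `log |V|` and `R ^ 2` by `k`, and the `ℓ_1`-sum of `j` copies of the result multiplies
`log |ℱ|` and `r ^ (-2)` by `j`; everything else changes only by logarithmic factors. Hence there is
a polytope in `ℝ^(j k s)` with `log |V| ≈ k s`, `log |ℱ| ≈ j s` and `(R / r) ^ 2 ≈ j k`. It is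
unconditional, so its sections and projections onto `n ≤ j k s` coordinates agree and satisfy the
same bounds. It remains to take for `j`, `k`, `s` suitable powers of `n`.
-/

open Module Finset Function
open scoped Topology RealInnerProductSpace

section Polyhedron

variable {E : Type*} [NormedAddCommGroup E] [InnerProductSpace ℝ E] {T : Finset E} {P G : Set E}

/-- The polyhedron `{y | ⟪f, y⟫ ≤ 1 for all f ∈ T}`: the form in which a polytope with `0` in its
interior is given by its facet normals. -/
def polyhedron (T : Finset E) : Set E := {y | ∀ f ∈ T, ⟪f, y⟫ ≤ 1}

/-- The facets of `P`: the exposed faces whose affine span has codimension one. Since `IsExposed`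
allows the empty face, `∅` counts when `finrank ℝ E ≤ 1`. -/
def facets (P : Set E) : Set (Set E) :=
  {G | IsExposed ℝ P G ∧ finrank ℝ (affineSpan ℝ G).direction = finrank ℝ E - 1}

theorem convex_polyhedron (T : Finset E) : Convex ℝ (polyhedron T) := by
  simp only [polyhedron, Set.ofPred_forall]
  exact convex_iInter₂ fun f _ => convex_halfSpace_le (innerSL ℝ f).toLinearMap.isLinear 1

theorem polyhedron_mem_nhds {z : E} (hz : ∀ f ∈ T, ⟪f, z⟫ < 1) : polyhedron T ∈ 𝓝 z :=
  (Filter.eventually_all_finset T).2 fun f hf =>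
    ((innerSL ℝ f).continuous.tendsto z).eventually_le_const (hz f hf)

theorem zero_mem_interior_polyhedron (T : Finset E) : (0 : E) ∈ interior (polyhedron T) :=
  mem_interior_iff_mem_nhds.2 (polyhedron_mem_nhds fun f _ => by simp)

theorem closedBall_subset_polyhedron {ρ : ℝ} (hρ : 0 < ρ) (hT : ∀ f ∈ T, ‖f‖ ≤ ρ) :
    Metric.closedBall 0 ρ⁻¹ ⊆ polyhedron T := by
  intro y hy f hf
  rw [mem_closedBall_zero_iff] at hy
  calc ⟪f, y⟫ ≤ ‖f‖ * ‖y‖ := real_inner_le_norm f y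
    _ ≤ ρ * ρ⁻¹ := by gcongr; exact hT f hf
    _ = 1 := mul_inv_cancel₀ hρ.ne'

theorem exists_mem_forall_inner_lt_one (hG : Convex ℝ G) (hne : G.Nonempty)
    (hle : G ⊆ polyhedron T) (hlt : ∀ f ∈ T, ∃ x ∈ G, ⟪f, x⟫ < 1) :
    ∃ z ∈ G, ∀ f ∈ T, ⟪f, z⟫ < 1 := by
  classical
  induction T using Finset.induction_on with
  | empty => exact ⟨hne.some, hne.some_mem, by simp⟩
  | insert f T _ ih =>
    obtain ⟨z, hzG, hz⟩ := ih (fun y hy g hg => hle hy g (Finset.mem_insert_of_mem hg))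
      fun g hg => hlt g (Finset.mem_insert_of_mem hg)
    obtain ⟨x, hxG, hx⟩ := hlt f (Finset.mem_insert_self f T)
    refine ⟨(1 / 2 : ℝ) • x + (1 / 2 : ℝ) • z,
      hG hxG hzG (by norm_num) (by norm_num) (by norm_num), fun g hg => ?_⟩
    have hgx := hle hxG g hg
    have hgz := hle hzG g hg
    rw [inner_add_right, real_inner_smul_right, real_inner_smul_right]
    rcases Finset.mem_insert.1 hg with rfl | hgT
    · linarith
    · linarith [hz g hgT]

theorem eq_of_isExposed_of_mem_nhds (hG : IsExposed ℝ P G) {z : E} (hzG : z ∈ G)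
    (hz : P ∈ 𝓝 z) : G = P := by
  obtain ⟨l, rfl⟩ := hG ⟨z, hzG⟩
  have hmax : IsLocalMax l z := Filter.mem_of_superset hz hzG.2
  have hl : l = 0 := hmax.hasFDerivAt_eq_zero l.hasFDerivAt
  simp [hl]

theorem exists_forall_inner_eq_one_of_isExposed (hG : IsExposed ℝ (polyhedron T) G)
    (hne : G.Nonempty) (hGP : G ≠ polyhedron T) : ∃ f ∈ T, ∀ x ∈ G, ⟪f, x⟫ = 1 := by
  by_contra! h
  obtain ⟨z, hzG, hz⟩ := exists_mem_forall_inner_lt_one (hG.convex (convex_polyhedron T)) hne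
    hG.subset fun f hf => (h f hf).imp fun x hx => ⟨hx.1, (hG.subset hx.1 f hf).lt_of_ne hx.2⟩
  exact hGP (eq_of_isExposed_of_mem_nhds hG hzG (polyhedron_mem_nhds hz))

theorem inter_affineSpan_subset_of_isExposed (hG : IsExposed ℝ P G) :
    P ∩ affineSpan ℝ G ⊆ G := by
  rintro y ⟨hyP, hy⟩
  obtain ⟨x, hx⟩ := (affineSpan_nonempty ℝ).1 ⟨y, hy⟩
  obtain ⟨l, rfl⟩ := hG ⟨x, hx⟩
  have hker : vectorSpan ℝ (l.toExposed P) ≤ LinearMap.ker (l : E →ₗ[ℝ] ℝ) := by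
    rw [vectorSpan_def, Submodule.span_le]
    rintro _ ⟨u, hu, v, hv, rfl⟩
    simp [le_antisymm (hv.2 u hu.1) (hu.2 v hv.1)]
  have hyx : l y = l x := by
    have := hker (vsub_mem_vectorSpan_of_mem_affineSpan_of_mem_affineSpan hy
      (subset_affineSpan ℝ _ hx))
    simpa [sub_eq_zero] using this
  exact ⟨hyP, fun w hw => hyx ▸ hx.2 w hw⟩

theorem direction_affineSpan_eq_orthogonal [FiniteDimensional ℝ E] {f : E} (hne : G.Nonempty)
    (hf : ∀ x ∈ G, ⟪f, x⟫ = 1)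
    (hd : finrank ℝ (affineSpan ℝ G).direction = finrank ℝ E - 1) :
    (affineSpan ℝ G).direction = (ℝ ∙ f)ᗮ := by
  have hf0 : f ≠ 0 := by
    rintro rfl
    simpa using hf _ hne.some_mem
  refine Submodule.eq_of_le_of_finrank_eq ?_ ?_
  · rw [direction_affineSpan, vectorSpan_def, Submodule.span_le]
    rintro _ ⟨u, hu, v, hv, rfl⟩
    simp [Submodule.mem_orthogonal_singleton_iff_inner_right, inner_sub_right, hf u hu, hf v hv]
  · have := Submodule.finrank_add_finrank_orthogonal (ℝ ∙ f)
    rw [finrank_span_singleton hf0] at this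
    omega

theorem exists_eq_of_mem_facets_polyhedron [FiniteDimensional ℝ E] (hE : 2 ≤ finrank ℝ E)
    (hG : G ∈ facets (polyhedron T)) :
    ∃ f ∈ T, {y ∈ polyhedron T | ⟪f, y⟫ = 1} = G := by
  obtain ⟨hexp, hd⟩ := hG
  have hne : G.Nonempty := by
    rw [Set.nonempty_iff_ne_empty]
    rintro rfl
    rw [AffineSubspace.span_empty, AffineSubspace.direction_bot, finrank_bot] at hd
    omega
  have hGP : G ≠ polyhedron T := by
    rintro rfl
    have hspan : affineSpan ℝ (polyhedron T) = ⊤ := affineSpan_eq_top_of_nonempty_interior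
      ⟨0, interior_mono (subset_convexHull ℝ _) (zero_mem_interior_polyhedron T)⟩
    rw [hspan, AffineSubspace.direction_top, finrank_top] at hd
    omega
  obtain ⟨f, hfT, hf⟩ := exists_forall_inner_eq_one_of_isExposed hexp hne hGP
  refine ⟨f, hfT, Set.Subset.antisymm ?_ fun y hy => ⟨hexp.subset hy, hf y hy⟩⟩
  rintro y ⟨hyP, hy⟩
  obtain ⟨x, hx⟩ := hne
  refine inter_affineSpan_subset_of_isExposed hexp ⟨hyP, ?_⟩
  rw [SetLike.mem_coe, ← AffineSubspace.vsub_right_mem_direction_iff_mem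
      (subset_affineSpan ℝ G hx) y, direction_affineSpan_eq_orthogonal ⟨x, hx⟩ hf hd,
    Submodule.mem_orthogonal_singleton_iff_inner_right, vsub_eq_sub, inner_sub_right, hy, hf x hx,
    sub_self]

theorem facets_polyhedron_subset_image [FiniteDimensional ℝ E] (hE : 2 ≤ finrank ℝ E) :
    facets (polyhedron T) ⊆ (fun f => {y ∈ polyhedron T | ⟪f, y⟫ = 1}) '' T :=
  fun _ hG => exists_eq_of_mem_facets_polyhedron hE hG

theorem finite_facets_polyhedron [FiniteDimensional ℝ E] (hE : 2 ≤ finrank ℝ E) :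
    (facets (polyhedron T)).Finite :=
  (T.finite_toSet.image _).subset (facets_polyhedron_subset_image hE)

theorem ncard_facets_polyhedron_le [FiniteDimensional ℝ E] (hE : 2 ≤ finrank ℝ E) :
    (facets (polyhedron T)).ncard ≤ T.card :=
  calc (facets (polyhedron T)).ncard
      ≤ ((fun f => {y ∈ polyhedron T | ⟪f, y⟫ = 1}) '' (T : Set E)).ncard :=
        Set.ncard_le_ncard (facets_polyhedron_subset_image hE) (T.finite_toSet.image _)
    _ ≤ T.card := (Set.ncard_image_le T.finite_toSet).trans_eq (Set.ncard_coe_finset T)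

end Polyhedron

theorem mem_of_forall_le_one_imp {E : Type*} [TopologicalSpace E] [AddCommGroup E] [Module ℝ E]
    [IsTopologicalAddGroup E] [ContinuousSMul ℝ E] [LocallyConvexSpace ℝ E] {K : Set E}
    (hconv : Convex ℝ K) (hclosed : IsClosed K) (h0 : 0 ∈ K) {x : E}
    (hx : ∀ l : StrongDual ℝ E, (∀ t ∈ K, l t ≤ 1) → l x ≤ 1) : x ∈ K := by
  by_contra hxK
  obtain ⟨l, u, hlt, hux⟩ := geometric_hahn_banach_closed_point hconv hclosed hxK
  have hu : 0 < u := by simpa using hlt 0 h0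
  have hle : u⁻¹ * l x ≤ 1 := hx (u⁻¹ • l) fun t ht => by
    simpa using (inv_mul_le_one₀ hu).2 (hlt t ht).le
  exact hux.not_ge ((inv_mul_le_one₀ hu).1 hle)

theorem dotProduct_le_of_mem_convexHull {ι : Type*} [Fintype ι] {S : Set (ι → ℝ)} {x y : ι → ℝ}
    {c : ℝ} (hx : x ∈ convexHull ℝ S) (h : ∀ s ∈ S, s ⬝ᵥ y ≤ c) : x ⬝ᵥ y ≤ c :=
  convexHull_min h
    (convex_halfSpace_le ⟨fun u v => add_dotProduct u v y, fun a u => smul_dotProduct a u y⟩ c) hx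

theorem mem_convexHull_of_forall_dotProduct_le_one {ι : Type*} [Fintype ι]
    {S : Set (ι → ℝ)} {T : Finset (ι → ℝ)} (h0 : 0 ∈ convexHull ℝ (T : Set (ι → ℝ)))
    (hS : ∀ y, (∀ t ∈ T, y ⬝ᵥ t ≤ 1) → y ∈ convexHull ℝ S) {x : ι → ℝ}
    (hx : ∀ s ∈ S, s ⬝ᵥ x ≤ 1) : x ∈ convexHull ℝ (T : Set (ι → ℝ)) := by
  classical
  refine mem_of_forall_le_one_imp (convex_convexHull ℝ _)
    (T.finite_toSet.isCompact_convexHull ℝ).isClosed h0 fun l hl => ?_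
  obtain ⟨y, hy⟩ := (dotProductEquiv ℝ ι).surjective l.toLinearMap
  have hly (v : ι → ℝ) : l v = y ⬝ᵥ v := (LinearMap.congr_fun hy v).symm
  rw [hly]
  exact dotProduct_le_of_mem_convexHull
    (hS y fun t ht => hly t ▸ hl t (subset_convexHull ℝ _ ht)) hx

/-- The polytopes `conv S` and `conv T` in `ℝ^ι` are polar to each other and invariant under
coordinatewise sign changes (`sum_abs_mul_le_one`). Such a pair records a polytope by its vertices
`S` and its facet normals `T`, both up to redundant elements. -/
structure IsPolarPair {ι : Type*} [Fintype ι] (S T : Finset (ι → ℝ)) : Prop where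
  sum_abs_mul_le_one : ∀ s ∈ S, ∀ t ∈ T, ∑ i, |s i * t i| ≤ 1
  mem_left : ∀ y, (∀ t ∈ T, y ⬝ᵥ t ≤ 1) → y ∈ convexHull ℝ (S : Set (ι → ℝ))
  mem_right : ∀ y, (∀ s ∈ S, s ⬝ᵥ y ≤ 1) → y ∈ convexHull ℝ (T : Set (ι → ℝ))

namespace IsPolarPair

variable {ι κ : Type*} [Fintype ι] [Fintype κ] {S T : Finset (ι → ℝ)}

theorem symm (h : IsPolarPair S T) : IsPolarPair T S where
  sum_abs_mul_le_one s hs t ht := by simpa only [mul_comm] using h.sum_abs_mul_le_one t ht s hs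
  mem_left y hy := h.mem_right y fun s hs => dotProduct_comm s y ▸ hy s hs
  mem_right y hy := h.mem_left y fun t ht => dotProduct_comm y t ▸ hy t ht

theorem dotProduct_le_one (h : IsPolarPair S T) {s t : ι → ℝ} (hs : s ∈ S) (ht : t ∈ T) :
    s ⬝ᵥ t ≤ 1 :=
  (Finset.sum_le_sum fun i _ => le_abs_self (s i * t i)).trans (h.sum_abs_mul_le_one s hs t ht)

theorem mem_convexHull_iff (h : IsPolarPair S T) {y : ι → ℝ} :
    y ∈ convexHull ℝ (S : Set (ι → ℝ)) ↔ ∀ t ∈ T, y ⬝ᵥ t ≤ 1 :=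
  ⟨fun hy _ ht => dotProduct_le_of_mem_convexHull hy fun _ hs => h.dotProduct_le_one hs ht,
    h.mem_left y⟩

theorem zero_mem_convexHull_right (h : IsPolarPair S T) : 0 ∈ convexHull ℝ (T : Set (ι → ℝ)) :=
  h.mem_right 0 fun s _ => by simp

section Restriction

variable (e : κ ↪ ι)

theorem comp_mem_convexHull_image (h : IsPolarPair S T) {y : κ → ℝ}
    (hy : ∀ t ∈ T.image (· ∘ e), y ⬝ᵥ t ≤ 1) :
    y ∈ convexHull ℝ ((S.image (· ∘ e) : Finset (κ → ℝ)) : Set (κ → ℝ)) := by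
  have hdot (t : ι → ℝ) : extend e y 0 ⬝ᵥ t = y ⬝ᵥ (t ∘ e) := by
    refine (Fintype.sum_of_injective e e.injective _ _ (fun i hi => ?_) fun j => ?_).symm
    · simp [extend_apply' _ _ _ (by simpa using hi)]
    · simp [e.injective.extend_apply]
  have hmem := h.mem_left (extend e y 0) fun t ht => hdot t ▸ hy _ (mem_image_of_mem _ ht)
  rw [coe_image, show (· ∘ e) = LinearMap.funLeft ℝ ℝ e from rfl, ← LinearMap.image_convexHull]
  exact ⟨_, hmem, extend_comp e.injective y 0⟩

theorem comp (h : IsPolarPair S T) : IsPolarPair (S.image (· ∘ e)) (T.image (· ∘ e)) where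
  sum_abs_mul_le_one := by
    simp only [forall_mem_image]
    intro s hs t ht
    calc ∑ j, |s (e j) * t (e j)| = ∑ i ∈ univ.map e, |s i * t i| := by rw [sum_map]
      _ ≤ ∑ i, |s i * t i| := sum_le_univ_sum_of_nonneg fun i => abs_nonneg _
      _ ≤ 1 := h.sum_abs_mul_le_one s hs t ht
  mem_left _ := h.comp_mem_convexHull_image e
  mem_right _ hy := h.symm.comp_mem_convexHull_image e fun t ht => dotProduct_comm t _ ▸ hy t ht

end Restriction

end IsPolarPair

theorem comp_dotProduct_self_le {ι κ : Type*} [Fintype ι] [Fintype κ] (e : κ ↪ ι) (x : ι → ℝ) :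
    (x ∘ e) ⬝ᵥ (x ∘ e) ≤ x ⬝ᵥ x :=
  calc ∑ j, x (e j) * x (e j) = ∑ i ∈ univ.map e, x i * x i := by rw [sum_map]
    _ ≤ ∑ i, x i * x i := sum_le_univ_sum_of_nonneg fun i => mul_self_nonneg _

section Power

variable {ι κ : Type*} [Fintype ι] [Fintype κ]

theorem uncurry_dotProduct_uncurry (x y : κ → ι → ℝ) :
    uncurry x ⬝ᵥ uncurry y = ∑ k, x k ⬝ᵥ y k :=
  Fintype.sum_prod_type _

variable (κ) [DecidableEq κ]

/-- The vertices of the `ℓ_∞`-sum of `κ` copies of `conv S`, that is, of its Cartesian power. -/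
noncomputable def lInftyPower (S : Finset (ι → ℝ)) : Finset (κ × ι → ℝ) :=
  (Fintype.piFinset fun _ : κ => S).image uncurry

/-- The vertices of the `ℓ_1`-sum of `κ` copies of `conv S`: the vertices of each copy, extended by
zero to the other blocks. -/
noncomputable def lOnePower (S : Finset (ι → ℝ)) : Finset (κ × ι → ℝ) :=
  (univ ×ˢ S).image fun q => uncurry (Pi.single q.1 q.2)

variable {κ}

theorem uncurry_dotProduct_uncurry_single (x : κ → ι → ℝ) (k : κ) (y : ι → ℝ) :
    uncurry x ⬝ᵥ uncurry (Pi.single k y) = x k ⬝ᵥ y := by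
  rw [uncurry_dotProduct_uncurry, sum_eq_single_of_mem k (mem_univ k) fun b _ hb => by simp [hb],
    Pi.single_eq_same]

theorem forall_mem_lInftyPower {S : Finset (ι → ℝ)} {p : (κ × ι → ℝ) → Prop} :
    (∀ x ∈ lInftyPower κ S, p x) ↔ ∀ x : κ → ι → ℝ, (∀ k, x k ∈ S) → p (uncurry x) := by
  simp [lInftyPower]

theorem forall_mem_lOnePower {S : Finset (ι → ℝ)} {p : (κ × ι → ℝ) → Prop} :
    (∀ x ∈ lOnePower κ S, p x) ↔ ∀ (k : κ), ∀ x ∈ S, p (uncurry (Pi.single k x)) := by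
  simp only [lOnePower, forall_mem_image, mem_product, Prod.forall, mem_univ, true_and]

theorem card_lInftyPower_le (S : Finset (ι → ℝ)) :
    (lInftyPower κ S).card ≤ S.card ^ Fintype.card κ :=
  card_image_le.trans_eq (by simp [Fintype.card_piFinset])

theorem card_lOnePower_le (S : Finset (ι → ℝ)) :
    (lOnePower κ S).card ≤ Fintype.card κ * S.card :=
  card_image_le.trans_eq (by simp)

theorem uncurry_mem_convexHull_lInftyPower {S : Finset (ι → ℝ)} {x : κ → ι → ℝ}
    (hx : ∀ k, x k ∈ convexHull ℝ (S : Set (ι → ℝ))) :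
    uncurry x ∈ convexHull ℝ (lInftyPower κ S : Set (κ × ι → ℝ)) := by
  rw [lInftyPower, coe_image, Fintype.coe_piFinset,
    show uncurry = (LinearEquiv.curry ℝ ℝ κ ι).symm.toLinearMap from rfl,
    ← LinearMap.image_convexHull, convexHull_pi]
  exact ⟨x, fun k _ => hx k, rfl⟩

theorem zero_mem_convexHull_lOnePower [Nonempty κ] {S : Finset (ι → ℝ)}
    (h0 : 0 ∈ convexHull ℝ (S : Set (ι → ℝ))) :
    0 ∈ convexHull ℝ (lOnePower κ S : Set (κ × ι → ℝ)) := by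
  let L (k : κ) : (ι → ℝ) →ₗ[ℝ] (κ × ι → ℝ) :=
    (LinearEquiv.curry ℝ ℝ κ ι).symm.toLinearMap ∘ₗ LinearMap.single ℝ (fun _ => ι → ℝ) k
  have hL (k : κ) : L k '' S ⊆ lOnePower κ S := by
    rintro _ ⟨x, hx, rfl⟩
    exact mem_image.2 ⟨(k, x), by simpa using hx, rfl⟩
  have k : κ := Classical.arbitrary κ
  refine convexHull_mono (hL k) ?_
  rw [← LinearMap.image_convexHull]
  exact ⟨0, h0, map_zero (L k)⟩

theorem dotProduct_self_le_of_mem_lInftyPower {S : Finset (ι → ℝ)} {c : ℝ}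
    (hS : ∀ x ∈ S, x ⬝ᵥ x ≤ c) : ∀ x ∈ lInftyPower κ S, x ⬝ᵥ x ≤ Fintype.card κ * c := by
  rw [forall_mem_lInftyPower]
  intro x hx
  rw [uncurry_dotProduct_uncurry]
  exact (sum_le_card_nsmul univ _ c fun k _ => hS _ (hx k)).trans_eq (by simp)

theorem dotProduct_self_le_of_mem_lOnePower {S : Finset (ι → ℝ)} {c : ℝ}
    (hS : ∀ x ∈ S, x ⬝ᵥ x ≤ c) : ∀ x ∈ lOnePower κ S, x ⬝ᵥ x ≤ c := by
  rw [forall_mem_lOnePower]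
  intro k x hx
  simpa [uncurry_dotProduct_uncurry_single] using hS x hx

namespace IsPolarPair

theorem lInfty [Nonempty κ] {S T : Finset (ι → ℝ)} (h : IsPolarPair S T) :
    IsPolarPair (lInftyPower κ S) (lOnePower κ T) := by
  have hleft (y : κ × ι → ℝ) (hy : ∀ t ∈ lOnePower κ T, y ⬝ᵥ t ≤ 1) :
      y ∈ convexHull ℝ (lInftyPower κ S : Set (κ × ι → ℝ)) := by
    rw [forall_mem_lOnePower] at hy
    refine uncurry_mem_convexHull_lInftyPower (x := curry y) fun k => h.mem_left _ fun t ht => ?_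
    simpa [← uncurry_dotProduct_uncurry_single] using hy k t ht
  refine ⟨?_, hleft, fun y hy => mem_convexHull_of_forall_dotProduct_le_one
    (zero_mem_convexHull_lOnePower h.zero_mem_convexHull_right) hleft hy⟩
  simp only [forall_mem_lInftyPower, forall_mem_lOnePower]
  intro s hs k t ht
  rw [Fintype.sum_prod_type, sum_eq_single_of_mem k (mem_univ k) fun b _ hb => by simp [hb]]
  simpa using h.sum_abs_mul_le_one (s k) (hs k) t ht

theorem lOne [Nonempty κ] {S T : Finset (ι → ℝ)} (h : IsPolarPair S T) :
    IsPolarPair (lOnePower κ S) (lInftyPower κ T) :=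
  h.symm.lInfty.symm

end IsPolarPair

end Power

theorem sum_le_sum_range_card_of_antitone {w : ℕ → ℝ} (hw : Antitone w) (U : Finset ℕ) :
    ∑ i ∈ U, w i ≤ ∑ i ∈ range (#U), w i := by
  induction U using Finset.induction_on_max with
  | empty => simp
  | insert a U hmax ih =>
    have ha : a ∉ U := fun h => (hmax a h).false
    have hcard : #U ≤ a := by
      simpa using card_le_card (fun x hx => mem_range.2 (hmax x hx) : U ⊆ range a)
    rw [sum_insert ha, card_insert_of_notMem ha, sum_range_succ, add_comm]
    exact add_le_add ih (hw hcard)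

theorem sum_range_ite_le_sub (b : ℕ → ℝ) {j s : ℕ} (hj : j ≤ s) :
    ∑ k ∈ range s, (if j ≤ k then b k - b (k + 1) else 0) = b j - b s := by
  have hIco : (range s).filter (j ≤ ·) = Ico j s := by
    ext k
    simp [and_comm]
  rw [← sum_filter, hIco, ← neg_inj, ← sum_neg_distrib, neg_sub, ← sum_Ico_sub b hj]
  exact sum_congr rfl fun k _ => neg_sub _ _

theorem sum_smul_mem_of_zero_mem {E ι : Type*} [AddCommGroup E] [Module ℝ E] {K : Set E}
    (hK : Convex ℝ K) (h0 : 0 ∈ K) {u : Finset ι} {c : ι → ℝ} {t : ι → E}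
    (hc : ∀ k ∈ u, 0 ≤ c k) (hsum : ∑ k ∈ u, c k ≤ 1) (ht : ∀ k ∈ u, t k ∈ K) :
    ∑ k ∈ u, c k • t k ∈ K := by
  have := hK.sum_mem (t := insertNone u) (w := fun o => o.elim (1 - ∑ k ∈ u, c k) c)
    (z := fun o => o.elim 0 t) (forall_mem_insertNone.2 ⟨by simpa using hsum, hc⟩)
    (by simp) (forall_mem_insertNone.2 ⟨h0, ht⟩)
  simpa using this

section Lorentz

variable {s : ℕ} {w : ℕ → ℝ}

/-- The weights `w 0, …, w (s - 1)`, permuted by `σ` and with signs `e`: a vertex of the unit ball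
of the Marcinkiewicz norm with weight `w`. -/
def signedRearrangement (w : ℕ → ℝ) (σ : Equiv.Perm (Fin s)) (e : Fin s → ℤˣ) : Fin s → ℝ :=
  fun i => e i * w (σ i)

/-- The indicator of `U` with signs `e`, divided by its Lorentz norm `w 0 + ⋯ + w (#U - 1)`. -/
noncomputable def normalizedIndicator (w : ℕ → ℝ) (U : Finset (Fin s)) (e : Fin s → ℤˣ) :
    Fin s → ℝ :=
  fun i => if i ∈ U then e i / ∑ m ∈ range (#U), w m else 0

/-- The vertices of the unit ball of the Marcinkiewicz norm on `ℝ^s` with weight `w`. -/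
noncomputable def marcinkiewiczVertices (w : ℕ → ℝ) (s : ℕ) : Finset (Fin s → ℝ) :=
  (univ : Finset (Equiv.Perm (Fin s) × (Fin s → ℤˣ))).image fun p => signedRearrangement w p.1 p.2

/-- A finite set whose convex hull is the unit ball of the Lorentz norm on `ℝ^s` with weight `w`. -/
noncomputable def lorentzGenerators (w : ℕ → ℝ) (s : ℕ) : Finset (Fin s → ℝ) :=
  (univ : Finset (Finset (Fin s) × (Fin s → ℤˣ))).image fun p => normalizedIndicator w p.1 p.2

theorem forall_mem_marcinkiewiczVertices {p : (Fin s → ℝ) → Prop} :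
    (∀ x ∈ marcinkiewiczVertices w s, p x) ↔
      ∀ (σ : Equiv.Perm (Fin s)) (e : Fin s → ℤˣ), p (signedRearrangement w σ e) := by
  simp only [marcinkiewiczVertices, forall_mem_image, Prod.forall, mem_univ, forall_true_left]

theorem forall_mem_lorentzGenerators {p : (Fin s → ℝ) → Prop} :
    (∀ x ∈ lorentzGenerators w s, p x) ↔
      ∀ (U : Finset (Fin s)) (e : Fin s → ℤˣ), p (normalizedIndicator w U e) := by
  simp only [lorentzGenerators, forall_mem_image, Prod.forall, mem_univ, forall_true_left]

theorem signedRearrangement_mem (σ : Equiv.Perm (Fin s)) (e : Fin s → ℤˣ) :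
    signedRearrangement w σ e ∈ marcinkiewiczVertices w s :=
  mem_image.2 ⟨(σ, e), mem_univ _, rfl⟩

theorem normalizedIndicator_mem (U : Finset (Fin s)) (e : Fin s → ℤˣ) :
    normalizedIndicator w U e ∈ lorentzGenerators w s :=
  mem_image.2 ⟨(U, e), mem_univ _, rfl⟩

theorem card_marcinkiewiczVertices_le (w : ℕ → ℝ) (s : ℕ) :
    #(marcinkiewiczVertices w s) ≤ s.factorial * 2 ^ s :=
  card_image_le.trans_eq (by simp [Fintype.card_perm])

theorem card_lorentzGenerators_le (w : ℕ → ℝ) (s : ℕ) : #(lorentzGenerators w s) ≤ 4 ^ s :=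
  card_image_le.trans_eq (by simp [← mul_pow])

theorem sum_abs_signedRearrangement_mul_normalizedIndicator_le_one (hw : Antitone w)
    (hpos : ∀ m, 0 < w m) (σ : Equiv.Perm (Fin s)) (e : Fin s → ℤˣ) (U : Finset (Fin s))
    (e' : Fin s → ℤˣ) :
    ∑ i, |signedRearrangement w σ e i * normalizedIndicator w U e' i| ≤ 1 := by
  have hW : 0 ≤ ∑ m ∈ range (#U), w m := sum_nonneg fun m _ => (hpos m).le
  have habs (i : Fin s) : |signedRearrangement w σ e i * normalizedIndicator w U e' i| =
      if i ∈ U then w (σ i) / ∑ m ∈ range (#U), w m else 0 := by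
    simp only [signedRearrangement, normalizedIndicator]
    split_ifs
    · rw [abs_mul, abs_mul, abs_div, abs_unit_intCast, abs_unit_intCast, abs_of_pos (hpos _),
        abs_of_nonneg hW, one_mul, mul_one_div]
    · simp
  have hsum : ∑ i ∈ U, w (σ i) ≤ ∑ m ∈ range (#U), w m := by
    simpa using sum_le_sum_range_card_of_antitone hw
      (U.map (σ.toEmbedding.trans Fin.valEmbedding))
  simp only [habs, sum_ite_mem, univ_inter, ← sum_div]
  exact div_le_one_of_le₀ hsum hW

theorem signedRearrangement_dotProduct_self (w : ℕ → ℝ) (σ : Equiv.Perm (Fin s))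
    (e : Fin s → ℤˣ) :
    signedRearrangement w σ e ⬝ᵥ signedRearrangement w σ e = ∑ m ∈ range s, w m ^ 2 := by
  have hterm (i : Fin s) :
      signedRearrangement w σ e i * signedRearrangement w σ e i = w (σ i) ^ 2 := by
    rw [signedRearrangement, ← sq, mul_pow, ← sq_abs, abs_unit_intCast, one_pow, one_mul]
  simp only [dotProduct, hterm]
  exact (Equiv.sum_comp σ fun i => w i ^ 2).trans (Fin.sum_univ_eq_sum_range (w · ^ 2) s)

theorem normalizedIndicator_dotProduct_self (w : ℕ → ℝ) (U : Finset (Fin s)) (e : Fin s → ℤˣ) :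
    normalizedIndicator w U e ⬝ᵥ normalizedIndicator w U e =
      #U / (∑ m ∈ range (#U), w m) ^ 2 := by
  have hterm (i : Fin s) : normalizedIndicator w U e i * normalizedIndicator w U e i =
      if i ∈ U then 1 / (∑ m ∈ range (#U), w m) ^ 2 else 0 := by
    rw [normalizedIndicator, ← sq]
    split_ifs
    · rw [div_pow, ← sq_abs, abs_unit_intCast, one_pow]
    · simp
  simp only [dotProduct, hterm, sum_ite_mem, univ_inter, sum_const, nsmul_eq_mul, mul_one_div]

theorem neg_mem_marcinkiewiczVertices {x : Fin s → ℝ} (hx : x ∈ marcinkiewiczVertices w s) :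
    -x ∈ marcinkiewiczVertices w s := by
  obtain ⟨⟨σ, e⟩, -, rfl⟩ := mem_image.1 hx
  exact mem_image.2 ⟨(σ, -e), mem_univ _, by ext; simp [signedRearrangement]⟩

theorem zero_mem_convexHull_marcinkiewiczVertices (w : ℕ → ℝ) (s : ℕ) :
    0 ∈ convexHull ℝ (marcinkiewiczVertices w s : Set (Fin s → ℝ)) := by
  have hmem := signedRearrangement_mem (w := w) (1 : Equiv.Perm (Fin s)) 1
  have hmid := (convex_convexHull ℝ (marcinkiewiczVertices w s : Set (Fin s → ℝ))).midpoint_mem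
    (subset_convexHull ℝ _ hmem) (subset_convexHull ℝ _ (neg_mem_marcinkiewiczVertices hmem))
  rwa [midpoint_self_neg] at hmid

theorem exists_eq_signedRearrangement_antitone (l : Fin s → ℝ) :
    ∃ (σ : Equiv.Perm (Fin s)) (e : Fin s → ℤˣ) (b : ℕ → ℝ),
      Antitone b ∧ b s = 0 ∧ l = signedRearrangement b σ e := by
  let τ := Tuple.sort fun i => -|l i|
  let b (m : ℕ) : ℝ := if h : m < s then |l (τ ⟨m, h⟩)| else 0
  refine ⟨τ⁻¹, fun i => if 0 ≤ l i then 1 else -1, b, fun m n hmn => ?_, by simp [b],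
    funext fun i => ?_⟩
  · by_cases hn : n < s
    · have hm := hmn.trans_lt hn
      have := Tuple.monotone_sort (fun i => -|l i|) (Fin.mk_le_mk (hx := hm) (hy := hn).2 hmn)
      simpa [b, hn, hm, τ] using this
    · simp only [b, hn, dite_false]
      split_ifs <;> simp
  · have hb : b (τ⁻¹ i : Fin s) = |l i| := by simp [b]
    rw [signedRearrangement, hb]
    rcases le_or_gt 0 (l i) with h | h
    · simp [h, abs_of_nonneg h]
    · simp [h.not_ge, abs_of_neg h]

/-- The set of the indices at which `signedRearrangement w σ e` takes the values
`± w 0, …, ± w k`. -/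
def initialSet (σ : Equiv.Perm (Fin s)) (k : ℕ) : Finset (Fin s) := {i | (σ i : ℕ) ≤ k}

theorem mem_initialSet {σ : Equiv.Perm (Fin s)} {k : ℕ} {i : Fin s} :
    i ∈ initialSet σ k ↔ (σ i : ℕ) ≤ k := by
  simp [initialSet]

theorem map_initialSet (σ : Equiv.Perm (Fin s)) {k : ℕ} (hk : k < s) :
    (initialSet σ k).map (σ.toEmbedding.trans Fin.valEmbedding) = range (k + 1) := by
  ext m
  simp only [mem_map, mem_initialSet, mem_range, Nat.lt_succ_iff]
  refine ⟨fun ⟨_, hi, him⟩ => him ▸ hi, fun hm => ⟨σ.symm ⟨m, hm.trans_lt hk⟩, ?_⟩⟩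
  simpa using hm

theorem card_initialSet (σ : Equiv.Perm (Fin s)) {k : ℕ} (hk : k < s) :
    #(initialSet σ k) = k + 1 := by
  simpa using congrArg card (map_initialSet σ hk)

theorem signedRearrangement_dotProduct_normalizedIndicator_initialSet (hpos : ∀ m, 0 < w m)
    (σ : Equiv.Perm (Fin s)) (e : Fin s → ℤˣ) {k : ℕ} (hk : k < s) :
    signedRearrangement w σ e ⬝ᵥ normalizedIndicator w (initialSet σ k) e = 1 := by
  have hsum : ∑ i ∈ initialSet σ k, w (σ i) = ∑ m ∈ range (k + 1), w m := by
    rw [← map_initialSet σ hk, sum_map]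
    rfl
  have hterm (i : Fin s) : signedRearrangement w σ e i * normalizedIndicator w (initialSet σ k) e i
      = if i ∈ initialSet σ k then w (σ i) / ∑ m ∈ range (k + 1), w m else 0 := by
    have he : (e i * e i : ℝ) = 1 := by rw [← abs_mul_abs_self, abs_unit_intCast, one_mul]
    simp only [signedRearrangement, normalizedIndicator, card_initialSet σ hk]
    split_ifs
    · linear_combination (w (σ i) / ∑ m ∈ range (k + 1), w m) * he
    · simp
  simp only [dotProduct, hterm, sum_ite_mem, univ_inter, ← sum_div, hsum]
  exact div_self (sum_pos (fun m _ => hpos m) nonempty_range_add_one).ne'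

/-- Abel summation over the level sets of the absolute values of the vector. -/
theorem signedRearrangement_eq_sum_smul_normalizedIndicator (hpos : ∀ m, 0 < w m) {b : ℕ → ℝ}
    (hb : b s = 0) (σ : Equiv.Perm (Fin s)) (e : Fin s → ℤˣ) :
    signedRearrangement b σ e = ∑ k ∈ range s, ((b k - b (k + 1)) * ∑ m ∈ range (k + 1), w m) •
      normalizedIndicator w (initialSet σ k) e := by
  ext i
  have hterm (k : ℕ) (hk : k ∈ range s) :
      (((b k - b (k + 1)) * ∑ m ∈ range (k + 1), w m) •
        normalizedIndicator w (initialSet σ k) e) i =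
      e i * if (σ i : ℕ) ≤ k then b k - b (k + 1) else 0 := by
    have hW : ∑ m ∈ range (k + 1), w m ≠ 0 :=
      (sum_pos (fun m _ => hpos m) nonempty_range_add_one).ne'
    simp only [Pi.smul_apply, smul_eq_mul, normalizedIndicator,
      card_initialSet σ (mem_range.1 hk), mem_initialSet]
    split_ifs
    · field_simp
    · simp
  rw [Finset.sum_apply, sum_congr rfl hterm, ← mul_sum, sum_range_ite_le_sub b (σ i).is_lt.le, hb,
    sub_zero, signedRearrangement]

theorem mem_convexHull_lorentzGenerators (hpos : ∀ m, 0 < w m) {l : Fin s → ℝ}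
    (hl : ∀ x ∈ marcinkiewiczVertices w s, x ⬝ᵥ l ≤ 1) :
    l ∈ convexHull ℝ (lorentzGenerators w s : Set (Fin s → ℝ)) := by
  obtain ⟨σ, e, b, hanti, hb, rfl⟩ := exists_eq_signedRearrangement_antitone l
  have hmem (U : Finset (Fin s)) :
      normalizedIndicator w U e ∈ convexHull ℝ (lorentzGenerators w s : Set (Fin s → ℝ)) :=
    subset_convexHull ℝ _ (normalizedIndicator_mem U e)
  have h0 : 0 ∈ convexHull ℝ (lorentzGenerators w s : Set (Fin s → ℝ)) := by
    convert hmem ∅ using 1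
    ext
    simp [normalizedIndicator]
  replace hl := hl _ (signedRearrangement_mem σ e)
  rw [signedRearrangement_eq_sum_smul_normalizedIndicator hpos hb σ e] at hl ⊢
  refine sum_smul_mem_of_zero_mem (convex_convexHull ℝ _) h0 (fun k _ =>
    mul_nonneg (sub_nonneg.2 (hanti k.le_succ)) (sum_nonneg fun m _ => (hpos m).le)) ?_
    fun k _ => hmem _
  rw [dotProduct_sum] at hl
  refine le_of_eq_of_le (sum_congr rfl fun k hk => ?_) hl
  rw [dotProduct_smul, signedRearrangement_dotProduct_normalizedIndicator_initialSet hpos σ e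
    (mem_range.1 hk), smul_eq_mul, mul_one]

theorem isPolarPair_marcinkiewiczVertices_lorentzGenerators (hw : Antitone w)
    (hpos : ∀ m, 0 < w m) (s : ℕ) :
    IsPolarPair (marcinkiewiczVertices w s) (lorentzGenerators w s) where
  sum_abs_mul_le_one := by
    simp only [forall_mem_marcinkiewiczVertices, forall_mem_lorentzGenerators]
    exact sum_abs_signedRearrangement_mul_normalizedIndicator_le_one hw hpos
  mem_left y hy := mem_convexHull_of_forall_dotProduct_le_one
    (zero_mem_convexHull_marcinkiewiczVertices w s)
    (fun l hl => mem_convexHull_lorentzGenerators hpos fun x hx => dotProduct_comm l x ▸ hl x hx)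
    fun t ht => dotProduct_comm y t ▸ hy t ht
  mem_right l hl := mem_convexHull_lorentzGenerators hpos hl

end Lorentz

section InvSqrtWeight

variable {s : ℕ}

/-- The weights `1, 1/√2, 1/√3, …`: with these the Lorentz generators have Euclidean norm at most
`1`, and the Marcinkiewicz vertices have norm `O(√(log s))`. -/
noncomputable def invSqrtWeight (m : ℕ) : ℝ := (√(m + 1))⁻¹

theorem invSqrtWeight_pos (m : ℕ) : 0 < invSqrtWeight m := by
  rw [invSqrtWeight]
  positivity

theorem antitone_invSqrtWeight : Antitone invSqrtWeight := fun m n hmn => by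
  simp only [invSqrtWeight]
  gcongr

theorem sum_range_invSqrtWeight_sq_le (s : ℕ) :
    ∑ m ∈ range s, invSqrtWeight m ^ 2 ≤ 1 + Real.log s := by
  have hharm : ∑ m ∈ range s, invSqrtWeight m ^ 2 = (harmonic s : ℝ) := by
    rw [harmonic, Rat.cast_sum]
    refine sum_congr rfl fun m _ => ?_
    rw [invSqrtWeight, inv_pow, Real.sq_sqrt (by positivity)]
    push_cast
    rfl
  exact hharm.trans_le (harmonic_le_one_add_log s)

theorem sqrt_le_sum_range_invSqrtWeight (k : ℕ) : √k ≤ ∑ m ∈ range k, invSqrtWeight m := by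
  have hle (m : ℕ) (hm : m ∈ range k) : (√k)⁻¹ ≤ invSqrtWeight m := by
    have hmk : (m + 1 : ℝ) ≤ k := mod_cast mem_range.1 hm
    rw [invSqrtWeight]
    gcongr
  calc √k = #(range k) • (√k)⁻¹ := by rw [card_range, nsmul_eq_mul, ← div_eq_mul_inv, Real.div_sqrt]
    _ ≤ ∑ m ∈ range k, invSqrtWeight m := card_nsmul_le_sum _ _ _ hle

theorem dotProduct_self_le_of_mem_marcinkiewiczVertices :
    ∀ x ∈ marcinkiewiczVertices invSqrtWeight s, x ⬝ᵥ x ≤ 1 + Real.log s :=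
  forall_mem_marcinkiewiczVertices.2 fun σ e =>
    (signedRearrangement_dotProduct_self _ σ e).trans_le (sum_range_invSqrtWeight_sq_le s)

theorem dotProduct_self_le_of_mem_lorentzGenerators :
    ∀ x ∈ lorentzGenerators invSqrtWeight s, x ⬝ᵥ x ≤ 1 :=
  forall_mem_lorentzGenerators.2 fun U e => by
    rw [normalizedIndicator_dotProduct_self]
    refine div_le_one_of_le₀ ?_ (sq_nonneg _)
    rw [← Real.sqrt_le_left (sum_nonneg fun m _ => (invSqrtWeight_pos m).le)]
    exact sqrt_le_sum_range_invSqrtWeight #U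

end InvSqrtWeight

theorem exists_isPolarPair_of_le_mul {n j k s : ℕ} (hj : j ≠ 0) (hk : k ≠ 0)
    (hn : n ≤ j * (k * s)) :
    ∃ S T : Finset (Fin n → ℝ), IsPolarPair S T ∧
      #S ≤ j * (s.factorial * 2 ^ s) ^ k ∧ #T ≤ (k * 4 ^ s) ^ j ∧
      (∀ x ∈ S, x ⬝ᵥ x ≤ k * (1 + Real.log s)) ∧ ∀ x ∈ T, x ⬝ᵥ x ≤ j := by
  have : NeZero j := ⟨hj⟩
  have : NeZero k := ⟨hk⟩
  obtain ⟨e⟩ : Nonempty (Fin n ↪ Fin j × (Fin k × Fin s)) :=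
    Embedding.nonempty_of_card_le (by simpa using hn)
  have hpair : IsPolarPair (marcinkiewiczVertices invSqrtWeight s)
      (lorentzGenerators invSqrtWeight s) :=
    isPolarPair_marcinkiewiczVertices_lorentzGenerators antitone_invSqrtWeight
      invSqrtWeight_pos s
  refine ⟨_, _, (hpair.lInfty (κ := Fin k)).lOne (κ := Fin j) |>.comp e, ?_, ?_, ?_, ?_⟩
  · calc _ ≤ j * #(lInftyPower (Fin k) (marcinkiewiczVertices invSqrtWeight s)) :=
          card_image_le.trans ((card_lOnePower_le _).trans_eq (by rw [Fintype.card_fin]))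
      _ ≤ j * (s.factorial * 2 ^ s) ^ k := by
        gcongr
        refine (card_lInftyPower_le _).trans ?_
        rw [Fintype.card_fin]
        gcongr
        exact card_marcinkiewiczVertices_le _ s
  · calc _ ≤ #(lOnePower (Fin k) (lorentzGenerators invSqrtWeight s)) ^ j :=
          card_image_le.trans ((card_lInftyPower_le _).trans_eq (by rw [Fintype.card_fin]))
      _ ≤ (k * 4 ^ s) ^ j := by
        gcongr
        refine (card_lOnePower_le _).trans ?_
        rw [Fintype.card_fin]
        gcongr
        exact card_lorentzGenerators_le _ s
  · refine forall_mem_image.2 fun x hx => (comp_dotProduct_self_le e x).trans ?_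
    have := dotProduct_self_le_of_mem_lOnePower (dotProduct_self_le_of_mem_lInftyPower
      dotProduct_self_le_of_mem_marcinkiewiczVertices) x hx
    rwa [Fintype.card_fin] at this
  · refine forall_mem_image.2 fun x hx => (comp_dotProduct_self_le e x).trans ?_
    have := dotProduct_self_le_of_mem_lInftyPower (dotProduct_self_le_of_mem_lOnePower
      dotProduct_self_le_of_mem_lorentzGenerators) x hx
    rwa [Fintype.card_fin, mul_one] at this

section EuclideanSpace

variable {ι : Type*}

/-- `S`, viewed in Euclidean space instead of the space `ι → ℝ`, which carries the sup norm. -/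
noncomputable def euclideanCopy (S : Finset (ι → ℝ)) : Finset (EuclideanSpace ℝ ι) :=
  S.map (WithLp.equiv 2 (ι → ℝ)).symm.toEmbedding

theorem card_euclideanCopy (S : Finset (ι → ℝ)) : #(euclideanCopy S) = #S :=
  card_map _

variable [Fintype ι] {S T : Finset (ι → ℝ)}

theorem norm_le_sqrt_of_mem_euclideanCopy {c : ℝ} (hS : ∀ x ∈ S, x ⬝ᵥ x ≤ c) :
    ∀ x ∈ euclideanCopy S, ‖x‖ ≤ √c := by
  refine forall_mem_map.2 fun x hx => Real.le_sqrt_of_sq_le ?_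
  rw [← real_inner_self_eq_norm_sq, EuclideanSpace.inner_eq_star_dotProduct]
  simpa using hS x hx

theorem convexHull_euclideanCopy_subset_closedBall {c : ℝ} (hS : ∀ x ∈ S, x ⬝ᵥ x ≤ c) :
    convexHull ℝ (euclideanCopy S : Set (EuclideanSpace ℝ ι)) ⊆ Metric.closedBall 0 √c :=
  convexHull_min (fun x hx => mem_closedBall_zero_iff.2
    (norm_le_sqrt_of_mem_euclideanCopy hS x hx)) (convex_closedBall _ _)

theorem IsPolarPair.convexHull_euclideanCopy_eq_polyhedron (h : IsPolarPair S T) :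
    convexHull ℝ (euclideanCopy S : Set (EuclideanSpace ℝ ι)) = polyhedron (euclideanCopy T) := by
  ext y
  rw [euclideanCopy, coe_map,
    show ⇑(WithLp.equiv 2 (ι → ℝ)).symm.toEmbedding =
      (WithLp.linearEquiv 2 ℝ (ι → ℝ)).symm.toLinearMap from rfl,
    ← LinearMap.image_convexHull, LinearEquiv.coe_coe, LinearEquiv.image_symm_eq_preimage,
    Set.mem_preimage, h.mem_convexHull_iff, polyhedron, Set.mem_ofPred_eq, euclideanCopy,
    forall_mem_map]
  simp [EuclideanSpace.inner_eq_star_dotProduct]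

end EuclideanSpace

theorem ncard_extremePoints_convexHull_le {E : Type*} [AddCommGroup E] [Module ℝ E]
    (S : Finset E) : ((convexHull ℝ (S : Set E)).extremePoints ℝ).ncard ≤ #S :=
  (Set.ncard_le_ncard extremePoints_convexHull_subset S.finite_toSet).trans_eq
    (Set.ncard_coe_finset S)

theorem logb_two_natCast_le {m n : ℕ} (h : m ≤ n) : Real.logb 2 m ≤ Real.logb 2 n := by
  rcases m.eq_zero_or_pos with rfl | hm
  · rw [Nat.cast_zero, Real.logb_zero, Real.logb]
    exact div_nonneg (Real.log_natCast_nonneg n) (Real.log_nonneg one_le_two)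
  · gcongr
    norm_num

section Asymptotics

theorem logb_two_le_of_le_mul_factorial_pow {j k s m : ℕ} {M : ℝ}
    (hj : j ≠ 0) (hk : k ≠ 0) (hs : s ≠ 0) (hM : 1 ≤ M) (hjM : j ≤ M) (hsM : s ≤ M)
    (hm : m ≤ j * (s.factorial * 2 ^ s) ^ k) :
    Real.logb 2 m ≤ k * s * (2 * Real.logb 2 M + 2) := by
  have hks : (1 : ℝ) ≤ k * s := mod_cast Nat.mul_pos (Nat.pos_of_ne_zero hk) (Nat.pos_of_ne_zero hs)
  have hM0 : 0 ≤ Real.logb 2 M := Real.logb_nonneg one_lt_two hM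
  have hjlog : Real.logb 2 j ≤ Real.logb 2 M := by gcongr; norm_num
  have hslog : Real.logb 2 s ≤ Real.logb 2 M := by gcongr; norm_num
  have hm' : m ≤ j * (s ^ s * 2 ^ s) ^ k := hm.trans (by gcongr; exact s.factorial_le_pow)
  calc Real.logb 2 m ≤ Real.logb 2 (j * (s ^ s * 2 ^ s) ^ k) :=
        mod_cast logb_two_natCast_le hm'
    _ = Real.logb 2 j + k * (s * Real.logb 2 s + s) := by
        rw [Real.logb_mul (by positivity) (by positivity), Real.logb_pow,
          Real.logb_mul (by positivity) (by positivity), Real.logb_pow, Real.logb_pow,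
          Real.logb_self_eq_one one_lt_two, mul_one]
    _ ≤ k * s * (2 * Real.logb 2 M + 2) := by
        have := mul_le_mul_of_nonneg_left hslog (by positivity : (0 : ℝ) ≤ k * s)
        nlinarith [mul_le_mul_of_nonneg_right hks hM0]

theorem logb_two_le_of_le_mul_pow_pow {j k s m : ℕ} {M : ℝ}
    (hk : k ≠ 0) (hs : s ≠ 0) (hM : 1 ≤ M) (hkM : k ≤ M) (hm : m ≤ (k * 4 ^ s) ^ j) :
    Real.logb 2 m ≤ j * s * (2 * Real.logb 2 M + 2) := by
  have hM0 : 0 ≤ Real.logb 2 M := Real.logb_nonneg one_lt_two hM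
  have hklog : Real.logb 2 k ≤ Real.logb 2 M := by gcongr; norm_num
  have hs1 : (1 : ℝ) ≤ s := mod_cast Nat.pos_of_ne_zero hs
  calc Real.logb 2 m ≤ Real.logb 2 ((k * (2 ^ 2) ^ s) ^ j) :=
        mod_cast logb_two_natCast_le hm
    _ = j * (Real.logb 2 k + s * 2) := by
        rw [Real.logb_pow, Real.logb_mul (by positivity) (by positivity), Real.logb_pow,
          Real.logb_pow, Real.logb_self_eq_one one_lt_two]
        push_cast
        ring
    _ ≤ j * (s * (2 * Real.logb 2 M + 2)) := by
        gcongr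
        nlinarith
    _ = j * s * (2 * Real.logb 2 M + 2) := by ring

theorem two_mul_logb_two_mul_add_two_le {N ε : ℝ} (hN : 1 ≤ N) (hε : 0 < ε) :
    2 * Real.logb 2 (2 * N) + 2 ≤ (4 + 2 / (ε * Real.log 2)) * N ^ ε := by
  have hlog : Real.logb 2 N ≤ N ^ ε / ε / Real.log 2 := by
    rw [Real.logb]
    gcongr
    exact Real.log_le_rpow_div (by positivity) hε
  have hone : 1 ≤ N ^ ε := Real.one_le_rpow hN hε.le
  rw [Real.logb_mul (by norm_num) (by positivity), Real.logb_self_eq_one one_lt_two]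
  calc 2 * (1 + Real.logb 2 N) + 2 ≤ 4 * N ^ ε + 2 * (N ^ ε / ε / Real.log 2) := by linarith
    _ = (4 + 2 / (ε * Real.log 2)) * N ^ ε := by field_simp

theorem mul_mul_le_mul_rpow {N a b c u v t p q r : ℝ} (hN : 0 < N) (ha : 0 ≤ a) (hv₀ : 0 ≤ v)
    (ht₀ : 0 ≤ t) (hu : u ≤ a * N ^ p) (hv : v ≤ b * N ^ q) (ht : t ≤ c * N ^ r) :
    u * v * t ≤ a * b * c * N ^ (p + q + r) := by
  have hb : 0 ≤ b * N ^ q := hv₀.trans hv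
  calc u * v * t ≤ a * N ^ p * (b * N ^ q) * (c * N ^ r) := by gcongr
    _ = a * b * c * N ^ (p + q + r) := by rw [Real.rpow_add hN, Real.rpow_add hN]; ring

theorem one_add_log_natCast_le {s : ℕ} {M : ℝ} (hM : 1 ≤ M) (hsM : s ≤ M) :
    1 + Real.log s ≤ 2 * Real.logb 2 M + 2 := by
  have hsM' : Real.log s ≤ Real.log M := by
    rcases s.eq_zero_or_pos with rfl | hs
    · simpa using Real.log_nonneg hM
    · gcongr
  have hM' : Real.log M ≤ Real.logb 2 M := by
    rw [Real.logb, le_div_iff₀ (Real.log_pos one_lt_two)]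
    exact mul_le_of_le_one_right (Real.log_nonneg hM) (by linarith [Real.log_two_lt_d9])
  linarith [Real.logb_nonneg one_lt_two hM]

theorem natCeil_rpow_le_two_mul_rpow {N p : ℝ} (hN : 1 ≤ N) (hp : 0 ≤ p) :
    (⌈N ^ p⌉₊ : ℝ) ≤ 2 * N ^ p :=
  Nat.ceil_le_two_mul (by linarith [Real.one_le_rpow hN hp])

theorem natCeil_rpow_le_two_mul {N p : ℝ} (hN : 1 ≤ N) (hp : 0 ≤ p) (hp1 : p ≤ 1) :
    (⌈N ^ p⌉₊ : ℝ) ≤ 2 * N :=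
  (natCeil_rpow_le_two_mul_rpow hN hp).trans
    (by gcongr; simpa using Real.rpow_le_rpow_of_exponent_le hN hp1)

theorem le_natCeil_rpow_mul {n : ℕ} (hn : n ≠ 0) {x y z : ℝ} (hxyz : x + y + z = 1) :
    n ≤ ⌈(n : ℝ) ^ x⌉₊ * (⌈(n : ℝ) ^ y⌉₊ * ⌈(n : ℝ) ^ z⌉₊) := by
  have hle : (n : ℝ) ≤ ⌈(n : ℝ) ^ x⌉₊ * (⌈(n : ℝ) ^ y⌉₊ * ⌈(n : ℝ) ^ z⌉₊) :=
    calc (n : ℝ) = (n : ℝ) ^ x * ((n : ℝ) ^ y * (n : ℝ) ^ z) := by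
          rw [← Real.rpow_add (by positivity), ← Real.rpow_add (by positivity), ← add_assoc,
            hxyz, Real.rpow_one]
      _ ≤ _ := by gcongr <;> exact Nat.le_ceil _
  exact_mod_cast hle

/-- The block sizes `j`, `k`, `s` are `n ^ x`, `n ^ y`, `n ^ z`, and `n ^ ε` absorbs the
logarithms. -/
theorem exists_isPolarPair_rpow_bounds {x y z ε : ℝ} (hx : 0 ≤ x) (hy : 0 ≤ y) (hz : 0 ≤ z)
    (hxyz : x + y + z = 1) (hε : 0 < ε) : ∃ C : ℝ, 0 < C ∧ ∀ n : ℕ, n ≠ 0 →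
      ∃ (S T : Finset (Fin n → ℝ)) (A B : ℝ), IsPolarPair S T ∧ 0 ≤ A ∧ 0 < B ∧
        (∀ v ∈ S, v ⬝ᵥ v ≤ A) ∧ (∀ v ∈ T, v ⬝ᵥ v ≤ B) ∧
        Real.logb 2 #S ≤ C * (n : ℝ) ^ (y + z + ε) ∧
        Real.logb 2 #T ≤ C * (n : ℝ) ^ (x + z + ε) ∧
        A * B ≤ C * (n : ℝ) ^ (x + y + ε) := by
  refine ⟨2 * 2 * (4 + 2 / (ε * Real.log 2)), by positivity, fun n hn => ?_⟩
  have hN : (1 : ℝ) ≤ n := mod_cast Nat.one_le_iff_ne_zero.2 hn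
  have h2N : (1 : ℝ) ≤ 2 * n := by linarith
  have hceil (p : ℝ) : ⌈(n : ℝ) ^ p⌉₊ ≠ 0 := (Nat.ceil_pos.2 (by positivity)).ne'
  have hlog : 0 ≤ Real.logb 2 (2 * n) := Real.logb_nonneg one_lt_two h2N
  have hbound {p q : ℝ} (hp : 0 ≤ p) (hq : 0 ≤ q) :
      ⌈(n : ℝ) ^ p⌉₊ * ⌈(n : ℝ) ^ q⌉₊ * (2 * Real.logb 2 (2 * n) + 2) ≤
        2 * 2 * (4 + 2 / (ε * Real.log 2)) * (n : ℝ) ^ (p + q + ε) :=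
    mul_mul_le_mul_rpow (by positivity) zero_le_two (by positivity) (by positivity)
      (natCeil_rpow_le_two_mul_rpow hN hp) (natCeil_rpow_le_two_mul_rpow hN hq)
      (two_mul_logb_two_mul_add_two_le hN hε)
  have hx2N := natCeil_rpow_le_two_mul hN hx (by linarith)
  have hy2N := natCeil_rpow_le_two_mul hN hy (by linarith)
  have hz2N := natCeil_rpow_le_two_mul hN hz (by linarith)
  obtain ⟨S, T, hpair, hS, hT, hSnorm, hTnorm⟩ :=
    exists_isPolarPair_of_le_mul (hceil x) (hceil y) (le_natCeil_rpow_mul hn hxyz)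
  refine ⟨S, T, _, _, hpair, by positivity, mod_cast Nat.pos_of_ne_zero (hceil x), hSnorm, hTnorm,
    (logb_two_le_of_le_mul_factorial_pow (hceil x) (hceil y) (hceil z) h2N hx2N hz2N hS).trans
      (hbound hy hz),
    (logb_two_le_of_le_mul_pow_pow (hceil y) (hceil z) h2N hy2N hT).trans (hbound hx hz), ?_⟩
  calc ⌈(n : ℝ) ^ y⌉₊ * (1 + Real.log ⌈(n : ℝ) ^ z⌉₊) * ⌈(n : ℝ) ^ x⌉₊
      ≤ ⌈(n : ℝ) ^ y⌉₊ * (2 * Real.logb 2 (2 * n) + 2) * ⌈(n : ℝ) ^ x⌉₊ := by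
        gcongr _ * ?_ * _
        exact one_add_log_natCast_le h2N hz2N
    _ = ⌈(n : ℝ) ^ x⌉₊ * ⌈(n : ℝ) ^ y⌉₊ * (2 * Real.logb 2 (2 * n) + 2) := by ring
    _ ≤ _ := hbound hx hy

end Asymptotics

theorem exists_isPolarPair_saturation_bounds {a δ : ℝ} (ha : a ∈ Set.Ioo (0 : ℝ) 1)
    (hδ : δ ∈ Set.Ioo (0 : ℝ) 1) : ∃ C : ℝ, 0 < C ∧ ∀ n : ℕ, n ≠ 0 →
      ∃ (S T : Finset (Fin n → ℝ)) (A B : ℝ), IsPolarPair S T ∧ 0 ≤ A ∧ 0 < B ∧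
        (∀ v ∈ S, v ⬝ᵥ v ≤ A) ∧ (∀ v ∈ T, v ⬝ᵥ v ≤ B) ∧
        Real.logb 2 #S ≤ C * (n : ℝ) ^ (a + δ * (1 - a)) ∧
        Real.logb 2 #T ≤ C * (n : ℝ) ^ (1 - a) ∧
        A * B ≤ C * (n : ℝ) ^ (1 - δ + a) := by
  obtain ⟨ha0, ha1⟩ := ha
  obtain ⟨hδ0, hδ1⟩ := hδ
  have haδ : 0 < a * (1 - δ) := mul_pos ha0 (sub_pos.2 hδ1)
  have hδa : 0 < δ * (1 - a) := mul_pos hδ0 (sub_pos.2 ha1)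
  have hx : 0 ≤ (1 - δ) * (1 - a) := mul_nonneg (by linarith) (by linarith)
  obtain ⟨ε, hε, hε₁, hε₂⟩ : ∃ ε : ℝ, 0 < ε ∧ 3 * ε ≤ a * (1 - δ) ∧ 2 * ε ≤ δ * (1 - a) :=
    ⟨min (a * (1 - δ) / 3) (δ * (1 - a) / 2), lt_min (div_pos haδ three_pos) (div_pos hδa two_pos),
      by linarith [min_le_left (a * (1 - δ) / 3) (δ * (1 - a) / 2)],
      by linarith [min_le_right (a * (1 - δ) / 3) (δ * (1 - a) / 2)]⟩
  obtain ⟨C, hC, h⟩ := exists_isPolarPair_rpow_bounds (x := (1 - δ) * (1 - a) + ε) (y := a + ε)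
    (z := δ * (1 - a) - 2 * ε) (by linarith) (by linarith) (by linarith) (by ring) hε
  refine ⟨C, hC, fun n hn => ?_⟩
  have hN : (1 : ℝ) ≤ n := mod_cast Nat.one_le_iff_ne_zero.2 hn
  obtain ⟨S, T, A, B, hpair, hA, hB, hSA, hTB, hS, hT, hAB⟩ := h n hn
  refine ⟨S, T, A, B, hpair, hA, hB, hSA, hTB, ?_, ?_, hAB.trans ?_⟩
  · convert hS using 3
    ring
  · convert hT using 3
    ring
  · exact mul_le_mul_of_nonneg_left (Real.rpow_le_rpow_of_exponent_le hN (by linarith)) hC.le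

theorem flm_near_saturation_rational_general (a : ℝ) (ha : a ∈ Set.Ioo (0 : ℝ) 1)
    (δ : ℝ) (hδ : δ ∈ Set.Ioo (0 : ℝ) 1) :
    ∃ C : ℝ, 0 < C ∧ ∀ n : ℕ, 2 ≤ n →
      ∃ (S : Finset (EuclideanSpace ℝ (Fin n))) (P : Set (EuclideanSpace ℝ (Fin n)))
        (V : Set (EuclideanSpace ℝ (Fin n))) (Fs : Set (Set (EuclideanSpace ℝ (Fin n))))
        (r R : ℝ),
        P = convexHull ℝ (S : Set (EuclideanSpace ℝ (Fin n))) ∧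
        (0 : EuclideanSpace ℝ (Fin n)) ∈ interior P ∧
        V = Set.extremePoints ℝ P ∧
        Fs = {G : Set (EuclideanSpace ℝ (Fin n)) |
          IsExposed ℝ P G ∧ Module.finrank ℝ (affineSpan ℝ G).direction = n - 1} ∧
        0 < r ∧ Metric.closedBall 0 r ⊆ P ∧ P ⊆ Metric.closedBall 0 R ∧
        V.Finite ∧ Fs.Finite ∧
        Real.logb 2 (Fs.ncard) ≤ C * (n : ℝ) ^ (1 - a) ∧
        Real.logb 2 (V.ncard) ≤ C * (n : ℝ) ^ (a + δ * (1 - a)) ∧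
        (R / r) ^ 2 ≤ C * (n : ℝ) ^ (1 - δ + a) ∧
        Real.logb 2 (V.ncard) * Real.logb 2 (Fs.ncard) * (R / r) ^ 2 ≤
          C ^ 3 * (n : ℝ) ^ (2 + a * (1 - δ)) := by
  obtain ⟨C, hC, h⟩ := exists_isPolarPair_saturation_bounds ha hδ
  refine ⟨C, hC, fun n hn => ?_⟩
  obtain ⟨S, T, A, B, hpair, hA, hB, hSA, hTB, hS, hT, hAB⟩ := h n (by omega)
  have hP := hpair.convexHull_euclideanCopy_eq_polyhedron
  have hdim : 2 ≤ finrank ℝ (EuclideanSpace ℝ (Fin n)) := by simpa using hn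
  have hF := (logb_two_natCast_le
    ((ncard_facets_polyhedron_le hdim).trans_eq (card_euclideanCopy T))).trans hT
  have hV := (logb_two_natCast_le
    ((ncard_extremePoints_convexHull_le _).trans_eq (card_euclideanCopy S))).trans hS
  have hR : (√A / (√B)⁻¹) ^ 2 ≤ C * (n : ℝ) ^ (1 - δ + a) := by
    rwa [div_inv_eq_mul, mul_pow, Real.sq_sqrt hA, Real.sq_sqrt hB.le]
  rw [← hP] at hF
  refine ⟨euclideanCopy S, _, _, facets _, (√B)⁻¹, √A, rfl, hP ▸ zero_mem_interior_polyhedron _,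
    rfl, by simp [facets], by positivity,
    hP ▸ closedBall_subset_polyhedron (by positivity) (norm_le_sqrt_of_mem_euclideanCopy hTB),
    convexHull_euclideanCopy_subset_closedBall hSA,
    (euclideanCopy S).finite_toSet.subset extremePoints_convexHull_subset,
    hP ▸ finite_facets_polyhedron hdim, hF, hV, hR, ?_⟩
  have hF₀ := logb_two_natCast_le (facets (convexHull ℝ (euclideanCopy S :
    Set (EuclideanSpace ℝ (Fin n))))).ncard.zero_le
  rw [Nat.cast_zero, Real.logb_zero] at hF₀
  convert mul_mul_le_mul_rpow (by positivity) hC.le hF₀ (sq_nonneg _) hV hF hR using 2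
  · ring
  · congr 1
    ring

/-- **Theorem 1.3, part 1.** Let `a ∈ (0,1)` be rational and `δ ∈ (0,1)`. There is a
constant `C > 0` depending only on `a` and `δ`, and for every `n ≥ 2` a polytope
`P_n ⊂ ℝ^n` (the convex hull of a finite set, with the origin in its interior, with
vertex set `V`, facet set `ℱ` -- the exposed faces whose affine span has dimension
`n-1` -- and with `r·B₂ⁿ ⊆ P_n ⊆ R·B₂ⁿ`), such that `log₂|ℱ| ≤ C·n^{1-a}`,
`log₂|V| ≤ C·n^{a+δ(1-a)}` and `(R/r)² ≤ C·n^{1-δ+a}`; consequently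
`log₂|V| · log₂|ℱ| · (R/r)² ≤ C³·n^{2+a(1-δ)}`. -/
theorem flm_near_saturation_rational (a : ℝ) (ha : a ∈ Set.Ioo (0 : ℝ) 1)
    (haQ : ∃ s : ℚ, a = (s : ℝ)) (δ : ℝ) (hδ : δ ∈ Set.Ioo (0 : ℝ) 1) :
    ∃ C : ℝ, 0 < C ∧ ∀ n : ℕ, 2 ≤ n →
      ∃ (S : Finset (EuclideanSpace ℝ (Fin n))) (P : Set (EuclideanSpace ℝ (Fin n)))
        (V : Set (EuclideanSpace ℝ (Fin n))) (Fs : Set (Set (EuclideanSpace ℝ (Fin n))))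
        (r R : ℝ),
        P = convexHull ℝ (S : Set (EuclideanSpace ℝ (Fin n))) ∧
        (0 : EuclideanSpace ℝ (Fin n)) ∈ interior P ∧
        V = Set.extremePoints ℝ P ∧
        Fs = {G : Set (EuclideanSpace ℝ (Fin n)) |
          IsExposed ℝ P G ∧ Module.finrank ℝ (affineSpan ℝ G).direction = n - 1} ∧
        0 < r ∧ Metric.closedBall 0 r ⊆ P ∧ P ⊆ Metric.closedBall 0 R ∧
        V.Finite ∧ Fs.Finite ∧
        Real.logb 2 (Fs.ncard) ≤ C * (n : ℝ) ^ (1 - a) ∧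
        Real.logb 2 (V.ncard) ≤ C * (n : ℝ) ^ (a + δ * (1 - a)) ∧
        (R / r) ^ 2 ≤ C * (n : ℝ) ^ (1 - δ + a) ∧
        Real.logb 2 (V.ncard) * Real.logb 2 (Fs.ncard) * (R / r) ^ 2 ≤
          C ^ 3 * (n : ℝ) ^ (2 + a * (1 - δ)) :=
  flm_near_saturation_rational_general a ha δ hδ
end
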